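/- arXiv:math/0112002 — 4 statements merged into one kernel-verified Lean document; each statement's English description precedes it below -/
import Mathlib

section
/- Under the hypotheses of the preceding distributional inequality (f = {f_v} holomorphic on B(s,R) × 𝔻₁, R > 1, 0 < ρ < 1, V ⊂ B(s,1) bounded convex of real dimension k with 0 < H^k(V) < ∞, sup_{v∈V} sup_{z∈𝔻₁} |f_v(z)| ≤ M₁, sup_{v∈V} |f_v(0)| ≥ M₂ > 0, and D > 0 such that sup_V |f₀| ≤ (4k·H^k(V)/H^k(ω))^D · sup_ω |f₀| for every measurable ω ⊆ V, where f₀(v) := f_v(0)), the average number of zeros satisfies (1/H^k(V)) ∫_V 𝒩_{f,ρ}(v) dH^k(v) ≤ [D·log(4ek) + log(M₁/M₂)] / log(1/ρ). -/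
open MeasureTheory Metric
open scoped ENNReal NNReal Real

/-!
Jensen's inequality bounds the number of zeros of `f v` in the closed disk of radius `ρ` by
`log (M₁ / ‖f v 0‖) / log (1 / ρ)` whenever `f v 0 ≠ 0` (`numZeros_le`). With
`S = sup_V ‖f · 0‖`, split `log (M₁ / ‖f v 0‖) = log (M₁ / S) + log (S / ‖f v 0‖)`; the first term
is at most `log (M₁ / M₂)`.

For the second term, the Remez-type hypothesis applied to the sublevel sets
`ω = {v ∈ V | ‖f v 0‖ ≤ S * exp (-u)}` gives `μH[k] ω ≤ 4 k exp (-u / D) μH[k] V`. In particular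
`f · 0` vanishes only on a null set, and the layer-cake formula bounds the average of
`log (S / ‖f v 0‖)` by `∫₀^∞ min (1, 4 k exp (-u / D)) du = D log (4 e k)`
(`lintegral_ofReal_le_of_exp_tail`).

The Remez-type hypothesis concerns Borel sets only, while a convex set need not be Borel. However, a
convex set is null measurable for the Hausdorff measure of its own dimension, because its relative
boundary is null (`Convex.nullMeasurableSet_hausdorffMeasure`), so `V` may be replaced by a Borel
subset of full measure.
-/

/-- `𝒩_{f,ρ}(v)`: the number of zeros of `g` in the closed disk of radius `ρ`
(valued in `ℝ≥0∞`; it equals `⊤` when `g` vanishes identically on the unit disk,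
since then the zero set is infinite). -/
noncomputable def numZeros (g : ℂ → ℂ) (ρ : ℝ) : ℝ≥0∞ :=
  (({z : ℂ | z ∈ closedBall (0 : ℂ) ρ ∧ g z = 0}).encard : ℕ∞)

noncomputable instance {s : ℕ} : MeasurableSpace (EuclideanSpace ℂ (Fin s)) :=
  borel _

instance {s : ℕ} : BorelSpace (EuclideanSpace ℂ (Fin s)) := ⟨rfl⟩

/-- Jensen's inequality on the open unit disk: it is applied on disks of radius `r < 1` to `g / M`,
and then `r → 1`. -/
theorem card_zeros_le {g : ℂ → ℂ} {M ρ : ℝ} (hρ0 : 0 < ρ) (hρ1 : ρ < 1)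
    (hg : DifferentiableOn ℂ g (ball 0 1)) (hM : ∀ z ∈ ball (0 : ℂ) 1, ‖g z‖ ≤ M)
    (h0 : g 0 ≠ 0) (T : Finset ℂ) (hT : ∀ z ∈ T, z ∈ closedBall (0 : ℂ) ρ ∧ g z = 0) :
    (T.card : ℝ) ≤ Real.log (M / ‖g 0‖) / Real.log (1 / ρ) := by
  have hM0 : 0 < M := (norm_pos_iff.2 h0).trans_le (hM 0 (by simp))
  have key : ∀ r ∈ Set.Ioo ρ 1, (T.card : ℝ) ≤ Real.log (M / ‖g 0‖) / Real.log (r / ρ) := by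
    rintro r ⟨hr, hr1⟩
    have hr0 : 0 < r := hρ0.trans hr
    set h : ℂ → ℂ := fun z => g z / M with hh
    have hga : AnalyticOnNhd ℂ g (ball 0 1) := hg.analyticOnNhd isOpen_ball
    have hsub : closedBall (0 : ℂ) |r| ⊆ ball 0 1 :=
      closedBall_subset_ball (by rwa [abs_of_pos hr0])
    have hana : AnalyticOnNhd ℂ h (closedBall 0 |r|) :=
      fun z hz => (hga z (hsub hz)).div_const
    have hsubρ : closedBall (0 : ℂ) |ρ| ⊆ closedBall 0 |r| :=
      closedBall_subset_closedBall (by rw [abs_of_pos hr0, abs_of_pos hρ0]; exact hr.le)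
    have hanaρ : AnalyticOnNhd ℂ h (closedBall 0 |ρ|) := hana.mono hsubρ
    have hh0 : h 0 ≠ 0 := div_ne_zero h0 (by exact_mod_cast hM0.ne')
    have J := AnalyticOnNhd.sum_divisor_le (c := 0) (r := ρ) (R := r) (M := 1) (f := h)
      (abs_pos.2 hρ0.ne') (by rwa [abs_of_pos hr0, abs_of_pos hρ0]) le_rfl hana hh0
      (fun z hz => by
        have := hM z (hsub (sphere_subset_closedBall hz))
        simp only [hh, norm_div, Complex.norm_real, Real.norm_eq_abs, abs_of_pos hM0]
        exact (div_le_one hM0).2 this)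
    have e : (1 : ℝ) / ‖h 0‖ = M / ‖g 0‖ := by
      simp only [hh, norm_div, Complex.norm_real, Real.norm_eq_abs, abs_of_pos hM0, one_div_div]
    rw [e] at J
    refine le_trans ?_ J
    have hfin := (MeromorphicOn.divisor h (closedBall 0 |ρ|)).finiteSupport
      (isCompact_closedBall 0 |ρ|)
    have hnn := MeromorphicOn.AnalyticOnNhd.divisor_nonneg hanaρ
    have hone : ∀ z ∈ T, 1 ≤ MeromorphicOn.divisor h (closedBall 0 |ρ|) z := by
      intro z hz
      obtain ⟨hzρ, hgz⟩ := hT z hz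
      have hz' : z ∈ closedBall (0 : ℂ) |ρ| := by rwa [abs_of_pos hρ0]
      rw [MeromorphicOn.AnalyticOnNhd.divisor_apply hanaρ hz']
      have hne0 : analyticOrderAt h z ≠ 0 :=
        (hanaρ z hz').analyticOrderAt_ne_zero.2 (by simp [hh, hgz])
      have hnt : analyticOrderAt h z ≠ ⊤ := by
        have h0' : analyticOrderAt h 0 ≠ ⊤ := by
          rw [(hana 0 (by simp)).analyticOrderAt_eq_zero.2 hh0]; simp
        exact hana.analyticOrderAt_ne_top_of_isPreconnected
          (convex_closedBall (0 : ℂ) |r|).isPreconnected (by simp) (hsubρ hz') h0'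
      lift analyticOrderAt h z to ℕ using hnt with n hn
      have : n ≠ 0 := by exact_mod_cast hne0
      simp
      omega
    have : (T.card : ℤ) ≤ ∑ᶠ u, MeromorphicOn.divisor h (closedBall 0 |ρ|) u := by
      rw [finsum_eq_sum_of_support_subset (s := hfin.toFinset ∪ T) _
        (by intro x hx; simp; left; exact hx)]
      calc (T.card : ℤ) = ∑ z ∈ T, 1 := by simp
        _ ≤ ∑ z ∈ T, MeromorphicOn.divisor h (closedBall 0 |ρ|) z := Finset.sum_le_sum hone
        _ ≤ _ := Finset.sum_le_sum_of_subset_of_nonneg Finset.subset_union_right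
            (fun z _ _ => hnn z)
    exact_mod_cast this
  have hlim : Filter.Tendsto (fun r : ℝ => Real.log (M / ‖g 0‖) / Real.log (r / ρ))
      (nhdsWithin 1 (Set.Iio 1)) (nhds (Real.log (M / ‖g 0‖) / Real.log (1 / ρ))) := by
    have hl : Real.log (1 / ρ) ≠ 0 := (Real.log_pos (by rw [lt_div_iff₀ hρ0]; linarith)).ne'
    have : ContinuousAt (fun r : ℝ => Real.log (M / ‖g 0‖) / Real.log (r / ρ)) 1 :=
      ContinuousAt.div continuousAt_const
        (ContinuousAt.log (by fun_prop) (by positivity)) hl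
    exact this.tendsto.mono_left nhdsWithin_le_nhds
  refine ge_of_tendsto hlim ?_
  filter_upwards [Ioo_mem_nhdsLT hρ1] with r hr using key r hr

theorem numZeros_le {g : ℂ → ℂ} {M ρ : ℝ} (hρ0 : 0 < ρ) (hρ1 : ρ < 1)
    (hg : DifferentiableOn ℂ g (ball 0 1)) (hM : ∀ z ∈ ball (0 : ℂ) 1, ‖g z‖ ≤ M)
    (h0 : g 0 ≠ 0) :
    numZeros g ρ ≤ ENNReal.ofReal (Real.log (M / ‖g 0‖) / Real.log (1 / ρ)) := by
  have hc := fun T hT => card_zeros_le hρ0 hρ1 hg hM h0 T hT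
  unfold numZeros
  have hfin : {z : ℂ | z ∈ closedBall (0 : ℂ) ρ ∧ g z = 0}.Finite := by
    by_contra hinf
    obtain ⟨n, hn⟩ := exists_nat_gt (Real.log (M / ‖g 0‖) / Real.log (1 / ρ))
    obtain ⟨T, hT, hcard⟩ := Set.Infinite.exists_subset_card_eq hinf n
    have := hc T (fun z hz => hT hz)
    rw [hcard] at this
    linarith
  rw [hfin.encard_eq_coe_toFinset_card]
  have := hc hfin.toFinset (fun z hz => by simpa using hz)
  simpa using ENNReal.ofReal_le_ofReal this

/-- The translate of `V` into its direction space is convex there, and the Hausdorff measure of that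
space in its own dimension is a Haar measure, for which convex sets are null measurable. -/
theorem Convex.nullMeasurableSet_hausdorffMeasure {E : Type*} [NormedAddCommGroup E]
    [NormedSpace ℝ E] [FiniteDimensional ℝ E] [MeasurableSpace E] [BorelSpace E] {V : Set E}
    (hV : Convex ℝ V) :
    NullMeasurableSet V (μH[Module.finrank ℝ (vectorSpan ℝ V)] : Measure E) := by
  rcases V.eq_empty_or_nonempty with rfl | ⟨v₀, hv₀⟩
  · simp
  set p := vectorSpan ℝ V
  let φ : p → E := fun x => x + v₀
  have hφ : Isometry φ := Isometry.of_dist_eq fun x y => by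
    simp [φ, Subtype.dist_eq]
  have hW : Convex ℝ (φ ⁻¹' V) := by
    have : φ ⁻¹' V = p.subtype ⁻¹' ((fun x => x + v₀) ⁻¹' V) := rfl
    rw [this]
    exact (hV.translate_preimage_left v₀).linear_preimage _
  have hWn : NullMeasurableSet (φ ⁻¹' V) (μH[Module.finrank ℝ p] : Measure p) :=
    hW.nullMeasurableSet _
  have hVi : φ '' (φ ⁻¹' V) = V := by
    refine Set.image_preimage_eq_of_subset fun v hv => ?_
    exact ⟨⟨v - v₀, vsub_mem_vectorSpan ℝ hv hv₀⟩, by simp [φ]⟩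
  obtain ⟨t, htV, htm, hte⟩ := hWn.exists_measurable_subset_ae_eq
  have hcl : Topology.IsClosedEmbedding φ := hφ.isClosedEmbedding
  have htφ : MeasurableSet (φ '' t) := hcl.measurableEmbedding.measurableSet_image.2 htm
  refine ⟨φ '' t, htφ, ?_⟩
  have hsub : φ '' t ⊆ V := hVi ▸ Set.image_mono htV
  refine (ae_eq_set.2 ⟨?_, ?_⟩)
  · rw [← hVi, ← Set.image_sdiff hφ.injective, hφ.hausdorffMeasure_image (Or.inl (by positivity))]
    exact (ae_eq_set.1 hte).2
  · rw [Set.sdiff_eq_empty.2 hsub]; simp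

/-- The layer-cake integral of `min (1, C * exp (-u / D))` over `u > 0`, split at
`u₀ = D * log C`, where the two bounds cross. -/
theorem lintegral_ofReal_le_of_exp_tail {α : Type*} [MeasurableSpace α] (μ : Measure α)
    [IsFiniteMeasure μ] {h : α → ℝ} (hm : AEMeasurable h μ) (hnn : 0 ≤ᵐ[μ] h) {C D : ℝ}
    (hC : 1 ≤ C) (hD : 0 < D)
    (htail : ∀ u > 0, μ.real {a | u ≤ h a} ≤ C * Real.exp (-u / D) * μ.real Set.univ) :
    ∫⁻ a, ENNReal.ofReal (h a) ∂μ
      ≤ ENNReal.ofReal (D * Real.log (Real.exp 1 * C)) * μ Set.univ := by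
  have hC0 : 0 < C := by linarith
  set u₀ := D * Real.log C with hu₀
  have hu₀0 : 0 ≤ u₀ := mul_nonneg hD.le (Real.log_nonneg hC)
  rw [lintegral_eq_lintegral_meas_le μ hnn hm, ← Set.Ioc_union_Ioi_eq_Ioi hu₀0]
  refine (lintegral_union_le _ _ _).trans ?_
  have h1 : ∫⁻ t in Set.Ioc 0 u₀, μ {a | t ≤ h a} ≤ ENNReal.ofReal u₀ * μ Set.univ := by
    calc _ ≤ ∫⁻ t in Set.Ioc 0 u₀, μ Set.univ := lintegral_mono fun t => measure_mono (by simp)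
      _ = _ := by simp [mul_comm]
  have h2 : ∫⁻ t in Set.Ioi u₀, μ {a | t ≤ h a} ≤ ENNReal.ofReal D * μ Set.univ := by
    have hint : IntegrableOn (fun x : ℝ => Real.exp ((-1 / D) * x)) (Set.Ioi u₀) :=
      integrableOn_exp_mul_Ioi (div_neg_of_neg_of_pos (by norm_num) hD) u₀
    have hval := integral_exp_mul_Ioi (div_neg_of_neg_of_pos (by norm_num : (-1 : ℝ) < 0) hD) u₀
    have hexp : Real.exp ((-1 / D) * u₀) = C⁻¹ := by
      rw [hu₀, show (-1 / D) * (D * Real.log C) = -Real.log C by field_simp, Real.exp_neg,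
        Real.exp_log hC0]
    calc _ ≤ ∫⁻ t in Set.Ioi u₀, ENNReal.ofReal C * μ Set.univ *
            ENNReal.ofReal (Real.exp ((-1 / D) * t)) := by
          refine setLIntegral_mono' measurableSet_Ioi fun t ht => ?_
          have := htail t (hu₀0.trans_lt ht)
          rw [← ofReal_measureReal, ← ofReal_measureReal (s := Set.univ), ← ENNReal.ofReal_mul hC0.le,
            ← ENNReal.ofReal_mul (by positivity)]
          refine ENNReal.ofReal_le_ofReal (this.trans_eq ?_)
          rw [show -t / D = (-1 / D) * t by ring]; ring
      _ = ENNReal.ofReal C * μ Set.univ * ENNReal.ofReal (D * C⁻¹) := by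
          rw [lintegral_const_mul' _ _ (by finiteness),
            ← ofReal_integral_eq_lintegral_ofReal hint (ae_of_all _ fun _ => (Real.exp_pos _).le),
            hval, hexp]
          congr 2
          field_simp
      _ = _ := by
          rw [mul_right_comm, ← ENNReal.ofReal_mul hC0.le]
          congr 2
          field_simp
  refine (add_le_add h1 h2).trans_eq ?_
  rw [← add_mul, ← ENNReal.ofReal_add hu₀0 hD.le, Real.log_mul (Real.exp_pos 1).ne' hC0.ne',
    Real.log_exp, hu₀]
  congr 2
  ring

/-- bound for the average number of zeros of a holomorphic family over a
convex set `V` of real dimension `k`, in terms of a Chebyshev-degree-type constant `D`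
for `f₀(v) := f_v(0)`. -/
theorem statement6 (s : ℕ) (hs : 1 ≤ s) (R ρ : ℝ) (hR : 1 < R) (hρ0 : 0 < ρ)
    (hρ1 : ρ < 1) (f : EuclideanSpace ℂ (Fin s) → ℂ → ℂ)
    (hf : DifferentiableOn ℂ (fun p : EuclideanSpace ℂ (Fin s) × ℂ => f p.1 p.2)
      (ball (0 : EuclideanSpace ℂ (Fin s)) R ×ˢ ball (0 : ℂ) 1))
    (V : Set (EuclideanSpace ℂ (Fin s))) (hV : Convex ℝ V)
    (hVb : Bornology.IsBounded V) (hV1 : V ⊆ ball 0 1)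
    (k : ℕ) (hk : Module.finrank ℝ ↥(vectorSpan ℝ V) = k)
    (hV0 : 0 < μH[k] V) (hVfin : μH[k] V < ⊤)
    (M₁ M₂ : ℝ) (hM₁ : ∀ v ∈ V, ∀ z ∈ ball (0 : ℂ) 1, ‖f v z‖ ≤ M₁)
    (hM₂pos : 0 < M₂) (hM₂ : M₂ ≤ sSup ((fun v => ‖f v 0‖) '' V))
    (D : ℝ) (hD : 0 < D)
    -- the defining (Remez-type) property of the Chebyshev degree of `f₀`:
    (hCheb : ∀ ω ⊆ V, MeasurableSet ω → 0 < μH[k] ω →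
      sSup ((fun v => ‖f v 0‖) '' V)
        ≤ (4 * k * (μH[k] V).toReal / (μH[k] ω).toReal) ^ D *
            sSup ((fun v => ‖f v 0‖) '' ω)) :
    ∫⁻ v in V, numZeros (f v) ρ ∂(μH[k])
      ≤ ENNReal.ofReal ((D * Real.log (4 * Real.exp 1 * k) + Real.log (M₁ / M₂)) /
          Real.log (1 / ρ)) * μH[k] V := by
  set S := sSup ((fun v => ‖f v 0‖) '' V) with hS
  have hS0 : 0 < S := hM₂pos.trans_le hM₂
  have hbdd : BddAbove ((fun v => ‖f v 0‖) '' V) :=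
    ⟨M₁, by rintro _ ⟨v, hv, rfl⟩; exact hM₁ v hv 0 (by simp)⟩
  have hVne : V.Nonempty := nonempty_of_measure_ne_zero hV0.ne'
  have hleS : ∀ v ∈ V, ‖f v 0‖ ≤ S := fun v hv => le_csSup hbdd ⟨v, hv, rfl⟩
  have hSM : S ≤ M₁ := csSup_le (hVne.image _) (by
    rintro _ ⟨v, hv, rfl⟩; exact hM₁ v hv 0 (by simp))
  have hL : 0 < Real.log (1 / ρ) := Real.log_pos (by rw [lt_div_iff₀ hρ0]; linarith)
  -- A convex set need not be Borel, so `V` is replaced by a Borel subset of full measure.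
  have hVn : NullMeasurableSet V μH[k] := by
    rw [← hk]; exact hV.nullMeasurableSet_hausdorffMeasure
  obtain ⟨V', hV'V, hV'm, hV'e⟩ := hVn.exists_measurable_subset_ae_eq
  have hμV' : μH[k] V' = μH[k] V := measure_congr hV'e
  have hball : ∀ v ∈ V, v ∈ ball (0 : EuclideanSpace ℂ (Fin s)) R := fun v hv =>
    ball_subset_ball hR.le (hV1 hv)
  have hcont : ContinuousOn (fun v => ‖f v 0‖) V' := by
    have h1 : ContinuousOn (fun v : EuclideanSpace ℂ (Fin s) => f v 0) V' :=
      hf.continuousOn.comp (f := fun v => (v, (0 : ℂ))) (by fun_prop)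
        (fun v hv => ⟨hball v (hV'V hv), by simp⟩)
    exact h1.norm
  -- For `k = 0` the Remez-type inequality would force `S ≤ 0`.
  have hk1 : 1 ≤ k := by
    by_contra hk0
    obtain rfl : k = 0 := by omega
    have := hCheb V' hV'V hV'm (hμV' ▸ hV0)
    simp [Real.zero_rpow hD.ne'] at this
    linarith
  have hk1' : (1 : ℝ) ≤ k := by exact_mod_cast hk1
  have hsub : ∀ t ≥ 0, (μH[k]).real (V' ∩ {v | ‖f v 0‖ ≤ t})
      ≤ 4 * k * (t / S) ^ (1 / D) * (μH[k]).real V := by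
    intro t ht
    set ω := V' ∩ {v | ‖f v 0‖ ≤ t} with hω
    have hωm : MeasurableSet ω := by
      obtain ⟨u, hu, hue⟩ := continuousOn_iff_isClosed.1 hcont (Set.Iic t) isClosed_Iic
      have : ω = u ∩ V' := by rw [← hue, hω, Set.inter_comm]; rfl
      rw [this]
      exact hu.measurableSet.inter hV'm
    have hωV : ω ⊆ V := Set.inter_subset_left.trans hV'V
    rcases eq_or_ne (μH[k] ω) 0 with h0 | h0
    · rw [measureReal_def, h0]
      simp only [ENNReal.toReal_zero]
      positivity
    have hωpos : 0 < (μH[k]).real ω :=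
      ENNReal.toReal_pos h0 ((measure_mono hωV).trans_lt hVfin).ne
    have hVpos : 0 < (μH[k]).real V := ENNReal.toReal_pos hV0.ne' hVfin.ne
    have hc := hCheb ω hωV hωm (pos_iff_ne_zero.2 h0)
    rw [← measureReal_def, ← measureReal_def] at hc
    have hsup : sSup ((fun v => ‖f v 0‖) '' ω) ≤ t :=
      Real.sSup_le (by rintro _ ⟨v, hv, rfl⟩; exact hv.2) ht
    have hA : 0 ≤ 4 * k * (μH[k]).real V / (μH[k]).real ω := by positivity
    have hc2 : S ≤ (4 * k * (μH[k]).real V / (μH[k]).real ω) ^ D * t :=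
      hc.trans (mul_le_mul_of_nonneg_left hsup (Real.rpow_nonneg hA D))
    have ht0 : 0 < t := by
      rcases ht.lt_or_eq with h | h
      · exact h
      · rw [← h, mul_zero] at hc2; linarith
    have hc3 : S / t ≤ (4 * k * (μH[k]).real V / (μH[k]).real ω) ^ D := (div_le_iff₀ ht0).2 hc2
    have hc4 := Real.rpow_le_rpow (by positivity) hc3 (by positivity : 0 ≤ 1 / D)
    rw [← Real.rpow_mul hA, mul_one_div_cancel hD.ne', Real.rpow_one, le_div_iff₀ hωpos] at hc4
    have hx : 0 < (S / t) ^ (1 / D) := by positivity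
    have hinv : (t / S) ^ (1 / D) = ((S / t) ^ (1 / D))⁻¹ := by
      rw [← Real.inv_rpow (by positivity), inv_div]
    rw [hinv]
    have : (μH[k]).real ω ≤ (4 * k * (μH[k]).real V) / (S / t) ^ (1 / D) := by
      rw [le_div_iff₀ hx]; linarith
    refine this.trans_eq ?_
    field_simp
  have hnull : ∀ᵐ v ∂(μH[k]).restrict V', f v 0 ≠ 0 := by
    have h0 := hsub 0 le_rfl
    rw [zero_div, Real.zero_rpow (by positivity), mul_zero, zero_mul] at h0
    have h1 : μH[k] (V' ∩ {v | ‖f v 0‖ ≤ 0}) = 0 := by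
      refine ((ENNReal.toReal_eq_zero_iff _).1 (le_antisymm h0 ENNReal.toReal_nonneg)).resolve_right ?_
      exact ((measure_mono (Set.inter_subset_left.trans hV'V)).trans_lt hVfin).ne
    rw [ae_restrict_iff' hV'm, ae_iff]
    refine measure_mono_null (fun v hv => ?_) h1
    simpa using hv
  have : IsFiniteMeasure ((μH[k] : Measure (EuclideanSpace ℂ (Fin s))).restrict V') :=
    ⟨by rw [Measure.restrict_apply_univ, hμV']; exact hVfin⟩
  have hmV' : ∀ᵐ v ∂(μH[k]).restrict V', v ∈ V' := ae_restrict_mem hV'm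
  have hmeas : AEMeasurable (fun v => Real.log (S / ‖f v 0‖)) ((μH[k]).restrict V') :=
    ((hcont.aemeasurable hV'm).const_div S).log
  have htail := lintegral_ofReal_le_of_exp_tail ((μH[k]).restrict V')
    (h := fun v => Real.log (S / ‖f v 0‖)) (C := 4 * k) (D := D) hmeas
    (by
      filter_upwards [hmV', hnull] with v hv hv0
      exact Real.log_nonneg ((one_le_div (norm_pos_iff.2 hv0)).2 (hleS v (hV'V hv))))
    (by linarith) hD
    (by
      intro u hu
      have h1 := hsub (S * Real.exp (-u)) (by positivity)
      rw [mul_div_cancel_left₀ _ hS0.ne', ← Real.exp_mul, mul_one_div] at h1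
      rw [measureReal_def, measureReal_def, Measure.restrict_apply_univ, hμV', ← measureReal_def]
      refine le_trans ?_ h1
      rw [measureReal_def]
      refine ENNReal.toReal_mono
        ((measure_mono (Set.inter_subset_left.trans hV'V)).trans_lt hVfin).ne ?_
      rw [Measure.restrict_apply' hV'm]
      refine measure_mono fun v hv => ⟨hv.2, ?_⟩
      have hv1 : u ≤ Real.log (S / ‖f v 0‖) := hv.1
      have hpos : 0 < ‖f v 0‖ := by
        -- at a zero of `f₀` the junk value `log (S / 0) = 0` is below `u`
        refine norm_pos_iff.2 fun h => ?_
        simp [h] at hv1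
        linarith
      have := (Real.le_log_iff_exp_le (by positivity)).1 hv1
      rw [le_div_iff₀ hpos] at this
      change ‖f v 0‖ ≤ S * Real.exp (-u)
      rw [Real.exp_neg, ← div_eq_mul_inv, le_div_iff₀ (Real.exp_pos u)]
      linarith)
  rw [Measure.restrict_apply_univ, hμV'] at htail
  rw [← Measure.restrict_congr_set hV'e]
  have hSM1 : 0 ≤ Real.log (M₁ / S) := Real.log_nonneg ((one_le_div hS0).2 hSM)
  have hpt : ∀ᵐ v ∂(μH[k]).restrict V', numZeros (f v) ρ
      ≤ ENNReal.ofReal (1 / Real.log (1 / ρ)) *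
        (ENNReal.ofReal (Real.log (M₁ / S)) + ENNReal.ofReal (Real.log (S / ‖f v 0‖))) := by
    filter_upwards [hmV', hnull] with v hv hv0
    have hg : DifferentiableOn ℂ (f v) (ball 0 1) :=
      hf.comp (f := fun z => (v, z)) (by fun_prop) (fun z hz => ⟨hball v (hV'V hv), hz⟩)
    refine (numZeros_le hρ0 hρ1 hg (hM₁ v (hV'V hv)) hv0).trans_eq ?_
    have hn := norm_pos_iff.2 hv0
    have hlog : Real.log (M₁ / ‖f v 0‖) = Real.log (M₁ / S) + Real.log (S / ‖f v 0‖) := by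
      have : 0 < M₁ := hS0.trans_le hSM
      rw [← Real.log_mul (by positivity) (by positivity)]
      congr 1
      field_simp
    rw [← ENNReal.ofReal_add hSM1
      (Real.log_nonneg ((one_le_div hn).2 (hleS v (hV'V hv)))), ← hlog,
      ← ENNReal.ofReal_mul (by positivity)]
    congr 1
    ring
  calc ∫⁻ v in V', numZeros (f v) ρ ∂(μH[k])
      ≤ ∫⁻ v in V', ENNReal.ofReal (1 / Real.log (1 / ρ)) *
        (ENNReal.ofReal (Real.log (M₁ / S)) + ENNReal.ofReal (Real.log (S / ‖f v 0‖))) ∂(μH[k]) :=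
        lintegral_mono_ae hpt
    _ = ENNReal.ofReal (1 / Real.log (1 / ρ)) * (ENNReal.ofReal (Real.log (M₁ / S)) * μH[k] V +
          ∫⁻ v in V', ENNReal.ofReal (Real.log (S / ‖f v 0‖)) ∂(μH[k])) := by
        rw [lintegral_const_mul' _ _ ENNReal.ofReal_ne_top, lintegral_add_left measurable_const,
          lintegral_const, Measure.restrict_apply_univ, hμV']
    _ ≤ ENNReal.ofReal (1 / Real.log (1 / ρ)) * (ENNReal.ofReal (Real.log (M₁ / M₂)) * μH[k] V +
          ENNReal.ofReal (D * Real.log (Real.exp 1 * (4 * k))) * μH[k] V) := by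
        have : Real.log (M₁ / S) ≤ Real.log (M₁ / M₂) := by
          have : 0 < M₁ := hS0.trans_le hSM
          gcongr
        gcongr
    _ = _ := by
        have h1 : 0 ≤ Real.log (M₁ / M₂) :=
          Real.log_nonneg ((one_le_div hM₂pos).2 (hM₂.trans hSM))
        have h2 : 0 ≤ D * Real.log (Real.exp 1 * (4 * k)) := by
          refine mul_nonneg hD.le (Real.log_nonneg ?_)
          have := Real.add_one_le_exp 1
          nlinarith
        rw [← add_mul, ← mul_assoc, ← ENNReal.ofReal_add h1 h2,
          ← ENNReal.ofReal_mul (by positivity)]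
        congr 2
        rw [show Real.exp 1 * (4 * k) = 4 * Real.exp 1 * k by ring]
        ring
end

section
/- Let N > 0 and d ≥ 1 satisfy N√d ≤ 1/(40π), and let δ be a real number with 0 ≤ δ ≤ 3N√d. Let H : ℂ × ℝ → ℂ be continuous with |H(z,φ)| ≤ δ for all z with |z| ≤ 1 and all φ ∈ [0,2π]. Suppose z : [0,2π] → ℂ is differentiable with z'(φ) = H(z(φ),φ)·z(φ) and |z(φ)| ≤ 1 for all φ ∈ [0,2π]. Then for every φ ∈ [0,2π], |z(φ) − z(0)| ≤ 2πδ·e^{2πδ}·|z(0)| ≤ 8πN√d·|z(0)|. -/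
/-!
The displacement `w = z - z 0` vanishes at `0` and satisfies `‖w'‖ = ‖H‖‖z‖ ≤ δ‖w‖ + δ‖z 0‖`, so
Grönwall's inequality gives `‖z φ - z 0‖ ≤ (exp (δ φ) - 1)‖z 0‖`. This replaces the exponential
representation of `z` and needs no integral of `H`. The first estimate then follows from
`exp x - 1 ≤ x * exp x`. For the second, `x = 2πδ ≤ 6πN√d ≤ 3/20`, and the same elementary
inequality gives `exp x ≤ 20/17 < 4/3`.
-/

open scoped Real

theorem exp_sub_one_le_mul_exp (x : ℝ) : Real.exp x - 1 ≤ x * Real.exp x := by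
  have h := Real.add_one_le_exp (-x)
  have h2 : Real.exp (-x) * Real.exp x = 1 := by rw [← Real.exp_add]; simp
  nlinarith [mul_le_mul_of_nonneg_right h (Real.exp_pos x).le]

/-- Grönwall's bound with zero initial value and inhomogeneity `K * a`; at `K = 0` both sides
vanish, so no case distinction is left. -/
theorem gronwallBound_zero_mul (K a x : ℝ) :
    gronwallBound 0 K (K * a) x = a * (Real.exp (K * x) - 1) := by
  rcases eq_or_ne K 0 with rfl | hK
  · simp [gronwallBound_K0]
  · rw [gronwallBound_of_K_ne_0 hK]
    field_simp
    ring

/-- displacement estimate for solutions of `dz/dφ = H(z,φ)·z` on `[0,2π]`: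
`|z(φ) − z(0)| ≤ 2πδ·e^{2πδ}·|z(0)| ≤ 8πN√d·|z(0)|` when `|H| ≤ δ ≤ 3N√d` and
`N√d ≤ 1/(40π)`. -/
theorem statement8 (N : ℝ) (hN : 0 < N) (d : ℕ) (hd : 1 ≤ d)
    (hNd : N * Real.sqrt d ≤ 1 / (40 * π))
    (δ : ℝ) (hδ0 : 0 ≤ δ) (hδ : δ ≤ 3 * (N * Real.sqrt d))
    (H : ℂ → ℝ → ℂ) (hHc : Continuous fun p : ℂ × ℝ => H p.1 p.2)
    (hH : ∀ z : ℂ, ‖z‖ ≤ 1 → ∀ φ ∈ Set.Icc (0 : ℝ) (2 * π), ‖H z φ‖ ≤ δ)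
    (z : ℝ → ℂ)
    (hz : ∀ φ ∈ Set.Icc (0 : ℝ) (2 * π),
      HasDerivWithinAt z (H (z φ) φ * z φ) (Set.Icc (0 : ℝ) (2 * π)) φ)
    (hz1 : ∀ φ ∈ Set.Icc (0 : ℝ) (2 * π), ‖z φ‖ ≤ 1) :
    ∀ φ ∈ Set.Icc (0 : ℝ) (2 * π),
      ‖z φ - z 0‖ ≤ 2 * π * δ * Real.exp (2 * π * δ) * ‖z 0‖ ∧
      2 * π * δ * Real.exp (2 * π * δ) * ‖z 0‖ ≤ 8 * π * N * Real.sqrt d * ‖z 0‖ := by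
  intro φ hφ
  have hπ := Real.pi_pos
  constructor
  · have hg : ‖z φ - z 0‖ ≤ gronwallBound 0 δ (δ * ‖z 0‖) (φ - 0) := by
      refine norm_le_gronwallBound_of_norm_deriv_right_le (f := fun t => z t - z 0)
        (f' := fun t => H (z t) t * z t) (a := 0) (b := 2 * π) ?_ ?_ ?_ ?_ φ hφ
      · exact fun t ht => ((hz t ht).continuousWithinAt).sub continuousWithinAt_const
      · intro t ht
        exact (((hz t (Set.Ico_subset_Icc_self ht)).mono_of_mem_nhdsWithin
          (Icc_mem_nhdsGE_of_mem ht)).sub_const (z 0))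
      · simp
      · intro t ht
        have ht' := Set.Ico_subset_Icc_self ht
        have htri : ‖z t‖ ≤ ‖z t - z 0‖ + ‖z 0‖ := by
          simpa using norm_add_le (z t - z 0) (z 0)
        calc ‖H (z t) t * z t‖ = ‖H (z t) t‖ * ‖z t‖ := norm_mul _ _
          _ ≤ δ * (‖z t - z 0‖ + ‖z 0‖) := by
            gcongr
            exact hH _ (hz1 t ht') t ht'
          _ = δ * ‖z t - z 0‖ + δ * ‖z 0‖ := by ring
    rw [gronwallBound_zero_mul, sub_zero] at hg
    have hmono : Real.exp (δ * φ) ≤ Real.exp (2 * π * δ) :=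
      Real.exp_le_exp.mpr (by nlinarith [mul_le_mul_of_nonneg_left hφ.2 hδ0])
    have h1 := exp_sub_one_le_mul_exp (2 * π * δ)
    calc ‖z φ - z 0‖ ≤ ‖z 0‖ * (Real.exp (δ * φ) - 1) := hg
      _ ≤ ‖z 0‖ * (2 * π * δ * Real.exp (2 * π * δ)) := by
        gcongr
        linarith
      _ = _ := by ring
  · refine mul_le_mul_of_nonneg_right ?_ (norm_nonneg _)
    have hs : N * Real.sqrt d * (40 * π) ≤ 1 := (le_div_iff₀ (by positivity)).mp hNd
    have hx : 2 * π * δ ≤ 6 * (π * (N * Real.sqrt d)) := by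
      nlinarith [mul_le_mul_of_nonneg_left hδ hπ.le]
    have hx2 : 2 * π * δ ≤ 3 / 20 := by linarith
    have hE : Real.exp (2 * π * δ) ≤ 4 / 3 := by
      nlinarith [exp_sub_one_le_mul_exp (2 * π * δ),
        mul_le_mul_of_nonneg_right hx2 (Real.exp_pos (2 * π * δ)).le]
    calc 2 * π * δ * Real.exp (2 * π * δ) ≤ 6 * (π * (N * Real.sqrt d)) * (4 / 3) := by
          gcongr
      _ = 8 * π * N * Real.sqrt d := by ring
end

section
/- Let d ≥ 1 and let a_{ki} ∈ ℂ, indexed by nonnegative integers (i,k) with 1 ≤ i + k ≤ d, satisfy Σ |a_{ki}|² ≤ N² for some N ≥ 0. Define F(x,y) = Σ_{1≤i+k≤d} a_{ki} x^k y^i for x, y ∈ ℂ. Then for every complex r with |r| ≤ 1 and every real φ, |F(r cos φ, r sin φ)| ≤ N√d · |r|. -/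
/-!
Every monomial of `F` has total degree at least one, so for `‖r‖ ≤ 1` each term is at most
`‖r‖ ‖a_{ki}‖ |cos φ|^k |sin φ|^i`. By Cauchy–Schwarz it remains to bound
`Σ (cos φ)^{2k} (sin φ)^{2i}` by `d` (`sum_coeffIdx_le`): grouping by the total degree
`n = i + k ∈ {1, …, d}`, each group is dominated by the binomial expansion of
`((sin φ)² + (cos φ)²)^n = 1`.
-/

open scoped Real

/-- Index set of coefficients: pairs `(i,k)` of nonnegative integers with `1 ≤ i+k ≤ d`. -/
def coeffIdx (d : ℕ) : Finset (ℕ × ℕ) :=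
  (Finset.range (d + 1) ×ˢ Finset.range (d + 1)).filter
    fun p => 1 ≤ p.1 + p.2 ∧ p.1 + p.2 ≤ d

/-- The binomial coefficients are at least one, so dropping them from the expansion of
`(x + y) ^ n` can only decrease it. -/
lemma sum_antidiagonal_le_add_pow (x y : ℝ) (hx : 0 ≤ x) (hy : 0 ≤ y) (n : ℕ) :
    ∑ p ∈ Finset.HasAntidiagonal.antidiagonal n, x ^ p.1 * y ^ p.2 ≤ (x + y) ^ n := by
  rw [(Commute.all x y).add_pow']
  refine Finset.sum_le_sum fun p hp => ?_
  have hle : p.1 ≤ n := (Nat.le_add_right _ _).trans_eq (Finset.HasAntidiagonal.mem_antidiagonal.mp hp)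
  have hc : (1 : ℝ) ≤ (n.choose p.1 : ℝ) := by
    exact_mod_cast Nat.choose_pos hle
  rw [nsmul_eq_mul]
  exact le_mul_of_one_le_left (by positivity) hc

/-- For `x + y = 1` each of the `d` homogeneous parts contributes at most one. -/
lemma sum_coeffIdx_le (d : ℕ) (x y : ℝ) (hx : 0 ≤ x) (hy : 0 ≤ y) (hxy : x + y = 1) :
    ∑ p ∈ coeffIdx d, x ^ p.1 * y ^ p.2 ≤ d := by
  have hmaps : ∀ p ∈ coeffIdx d, p.1 + p.2 ∈ Finset.Icc 1 d := by
    intro p hp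
    simpa using (Finset.mem_filter.mp hp).2
  rw [← Finset.sum_fiberwise_of_maps_to hmaps]
  calc _ ≤ ∑ n ∈ Finset.Icc 1 d, (1 : ℝ) := by
        refine Finset.sum_le_sum fun n _ => ?_
        refine le_trans (Finset.sum_le_sum_of_subset_of_nonneg ?_ ?_)
          ((sum_antidiagonal_le_add_pow x y hx hy n).trans (by simp [hxy]))
        · intro p hp
          exact Finset.HasAntidiagonal.mem_antidiagonal.mpr (Finset.mem_filter.mp hp).2
        · intro p _ _
          positivity
    _ = d := by simp

/-- if `Σ_{1 ≤ i+k ≤ d} |a_{ki}|² ≤ N²` and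
`F(x,y) = Σ_{1 ≤ i+k ≤ d} a_{ki} x^k y^i`, then for complex `r` with `|r| ≤ 1` and real
`φ`, `|F(r cos φ, r sin φ)| ≤ N √d |r|` (the index pair is `p = (i,k)`). -/
theorem statement10 (d : ℕ) (hd : 1 ≤ d) (N : ℝ) (hN : 0 ≤ N)
    (a : ℕ × ℕ → ℂ) (ha : ∑ p ∈ coeffIdx d, ‖a p‖ ^ 2 ≤ N ^ 2)
    (r : ℂ) (hr : ‖r‖ ≤ 1) (φ : ℝ) :
    ‖∑ p ∈ coeffIdx d,
        a p * (r * (Real.cos φ : ℂ)) ^ p.2 * (r * (Real.sin φ : ℂ)) ^ p.1‖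
      ≤ N * Real.sqrt d * ‖r‖ := by
  have hterm : ∀ p ∈ coeffIdx d,
      ‖a p * (r * (Real.cos φ : ℂ)) ^ p.2 * (r * (Real.sin φ : ℂ)) ^ p.1‖
        ≤ ‖a p‖ * (|Real.sin φ| ^ p.1 * |Real.cos φ| ^ p.2) * ‖r‖ := by
    intro p hp
    have h1 : p.1 + p.2 ≠ 0 := by
      have := (Finset.mem_filter.mp hp).2.1
      omega
    have hpow : ‖r‖ ^ (p.1 + p.2) ≤ ‖r‖ := pow_le_of_le_one (norm_nonneg r) hr h1
    calc _ = ‖a p‖ * (|Real.sin φ| ^ p.1 * |Real.cos φ| ^ p.2) * ‖r‖ ^ (p.1 + p.2) := by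
          simp only [norm_mul, norm_pow, Complex.norm_real, Real.norm_eq_abs]
          ring
      _ ≤ _ := by gcongr
  have hsum : ∑ p ∈ coeffIdx d, (|Real.sin φ| ^ p.1 * |Real.cos φ| ^ p.2) ^ 2 ≤ (d : ℝ) := by
    refine le_trans (le_of_eq (Finset.sum_congr rfl fun p _ => ?_))
      (sum_coeffIdx_le d (Real.sin φ ^ 2) (Real.cos φ ^ 2) (sq_nonneg _) (sq_nonneg _)
        (Real.sin_sq_add_cos_sq φ))
    rw [← sq_abs (Real.sin φ), ← sq_abs (Real.cos φ)]
    ring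
  calc _ ≤ ∑ p ∈ coeffIdx d, ‖a p‖ * (|Real.sin φ| ^ p.1 * |Real.cos φ| ^ p.2) * ‖r‖ :=
        norm_sum_le_of_le _ hterm
    _ = (∑ p ∈ coeffIdx d, ‖a p‖ * (|Real.sin φ| ^ p.1 * |Real.cos φ| ^ p.2)) * ‖r‖ := by
        rw [Finset.sum_mul]
    _ ≤ (Real.sqrt (∑ p ∈ coeffIdx d, ‖a p‖ ^ 2) *
          Real.sqrt (∑ p ∈ coeffIdx d, (|Real.sin φ| ^ p.1 * |Real.cos φ| ^ p.2) ^ 2)) * ‖r‖ := by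
        gcongr
        exact Real.sum_mul_le_sqrt_mul_sqrt _ _ _
    _ ≤ N * Real.sqrt d * ‖r‖ := by
        gcongr
        exact Real.sqrt_le_iff.mpr ⟨hN, ha⟩
end

section
/- Let s ≥ 1, R > 1, 0 < ρ < 1, and let (v,z) ↦ f_v(z) be holomorphic on B(s,R) × 𝔻₁. Let V ⊂ B(s,1) be a bounded convex set of real dimension k. Then there exists a subset S ⊂ V, closed in V and of H^k-measure zero, such that the function v ↦ 𝒩_{f,ρ}(v) is upper semicontinuous on V ∖ S; in particular, v ↦ 𝒩_{f,ρ}(v) is H^k-measurable on V, and for every T ≥ 0 the set {v ∈ V : 𝒩_{f,ρ}(v) ≥ T} is H^k-measurable. -/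
/-!
Call `(w, z)` a *good* point if every `f_{w'}` with `w'` near `w` has at most one zero near `z`
(`LocUniq`). By compactness of the closed disk, the parameters `w` all of whose points `(w, z)`,
`|z| ≤ ρ`, are good form an open set, and the number of zeros is upper semicontinuous there
(`numZeros_eventually_le`). Zeros are counted without multiplicity, so the obstruction to semicontinuity
is a multiple zero that splits, and the point is that this happens only on a null set.

Let `z₀` be a zero of `f_{w₀}` of multiplicity `n + 1`. Near `(w₀, z₀)` the zeros of the `n`-th
`z`-derivative form a holomorphic graph `z = ψ(w)`. If the lower derivatives all vanish identically
along the graph, Taylor's formula shows that `ψ(w)` is the only zero of `f_w` near `z₀`, so the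
point is good. Otherwise the zeros of multiplicity `n + 1` near `(w₀, z₀)` project into the zero set
of a nonzero holomorphic function, which is null (`local_null`). Countably many such neighbourhoods
cover all bad zeros of finite multiplicity, and the parameters for which `f_w` vanishes identically
also lie in the zero set of a nonzero holomorphic function, unless every `f_w` vanishes identically,
which is trivial (`exists_good_set`).

The parameters range only over a real convex set `V`, which need not span a complex subspace, so
nullity of zero sets is proved along real rays (`null_zeros`). Finally `V` is parametrized
isometrically by a convex set in its direction space, where `H^k` is a Haar measure and the frontier
of a convex set is null (`exists_exceptional`).
-/

open MeasureTheory Metric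
open scoped ENNReal NNReal Real

section

open Set Filter Topology

/-! ### Regularity of holomorphic functions of several variables -/

/-- The derivative of a holomorphic function of several variables is continuous: Cauchy's estimate
on a disk of radius `r / ‖w‖` in the direction `w`, applied to `t ↦ g (q + t • w) - g (p + t • w)`,
bounds `(g' q - g' p) w` by `‖w‖ / r` times the modulus of continuity of `g`. -/
theorem continuousOn_fderiv_of_holo {X : Type*} [NormedAddCommGroup X] [NormedSpace ℂ X]
    [ProperSpace X] {g : X → ℂ} {O : Set X} (hO : IsOpen O) (hg : DifferentiableOn ℂ g O) :
    ContinuousOn (fderiv ℂ g) O := by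
  intro p hp
  apply ContinuousAt.continuousWithinAt
  obtain ⟨r', hr', hrO'⟩ := Metric.isOpen_iff.1 hO p hp
  obtain ⟨r, hr, hrO⟩ : ∃ r > 0, closedBall p (2 * r) ⊆ O :=
    ⟨r' / 4, by positivity, (closedBall_subset_ball (by linarith)).trans hrO'⟩
  have huc : UniformContinuousOn g (closedBall p (2 * r)) :=
    (isCompact_closedBall p (2 * r)).uniformContinuousOn_of_continuous
      (hg.continuousOn.mono hrO)
  rw [Metric.continuousAt_iff]
  intro ε hε
  obtain ⟨δ, hδ, H⟩ := Metric.uniformContinuousOn_iff.1 huc (ε / 2 * r) (by positivity)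
  refine ⟨min δ r, lt_min hδ hr, fun {q} hq => ?_⟩
  have hqδ : dist q p < δ := hq.trans_le (min_le_left _ _)
  have hqr : dist q p < r := hq.trans_le (min_le_right _ _)
  rw [dist_eq_norm]
  refine lt_of_le_of_lt (ContinuousLinearMap.opNorm_le_bound _ (by positivity : 0 ≤ ε / 2) ?_)
    (half_lt_self hε)
  intro w
  rcases eq_or_ne w 0 with rfl | hw
  · simp
  have hw' : 0 < ‖w‖ := norm_pos_iff.2 hw
  have hin : ∀ x, dist x p ≤ r → ∀ t : ℂ, t ∈ closedBall (0 : ℂ) (r / ‖w‖) →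
      x + t • w ∈ closedBall p (2 * r) := by
    intro x hx t ht
    rw [mem_closedBall, dist_zero_right, le_div_iff₀ hw'] at ht
    rw [mem_closedBall, dist_eq_norm]
    calc ‖x + t • w - p‖ = ‖(x - p) + t • w‖ := by congr 1; abel
      _ ≤ ‖x - p‖ + ‖t • w‖ := norm_add_le _ _
      _ ≤ r + r := by rw [norm_smul, ← dist_eq_norm]; exact add_le_add hx ht
      _ = 2 * r := by ring
  have hda : ∀ x, dist x p ≤ r → ∀ t : ℂ, t ∈ closedBall (0 : ℂ) (r / ‖w‖) →
      HasDerivAt (fun t : ℂ => g (x + t • w)) (fderiv ℂ g (x + t • w) w) t := by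
    intro x hx t ht
    have h1 : HasFDerivAt g (fderiv ℂ g (x + t • w)) (x + t • w) :=
      (hg.differentiableAt (hO.mem_nhds (hrO (hin x hx t ht)))).hasFDerivAt
    have h2 : HasDerivAt (fun t : ℂ => x + t • w) w t := by
      simpa using ((hasDerivAt_id t).smul_const w).const_add x
    exact h1.comp_hasDerivAt t h2
  have hρ : 0 < r / ‖w‖ := by positivity
  set h : ℂ → ℂ := fun t => g (q + t • w) - g (p + t • w) with hh
  have hd : ∀ t ∈ closedBall (0 : ℂ) (r / ‖w‖), DifferentiableAt ℂ h t := fun t ht =>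
    ((hda q hqr.le t ht).sub (hda p (by simpa using hr.le) t ht)).differentiableAt
  have hd0 : deriv h 0 = (fderiv ℂ g q - fderiv ℂ g p) w := by
    have : deriv h 0 = _ := ((hda q hqr.le 0 (by simpa using hρ.le)).sub
      (hda p (by simpa using hr.le) 0 (by simpa using hρ.le))).deriv
    rw [this]
    simp
  have key := Complex.norm_deriv_le_of_forall_mem_sphere_norm_le (f := h) (c := 0) hρ
    (C := ε / 2 * r) ?_ ?_
  · rw [hd0] at key
    refine key.trans (le_of_eq ?_)
    field_simp
  · apply DifferentiableOn.diffContOnCl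
    rw [closure_ball _ hρ.ne']
    exact fun t ht => (hd t ht).differentiableWithinAt
  · intro t ht
    have ht' := sphere_subset_closedBall ht
    have := H _ (hin q hqr.le t ht') _ (hin p (by simpa using hr.le) t ht') (by simpa using hqδ)
    rw [dist_eq_norm] at this
    exact this.le

/-- Directional derivatives of a holomorphic function are holomorphic: write `g' x v` as a Cauchy
integral over a circle in the direction `v` and differentiate under the integral sign. -/
theorem differentiableOn_fderiv_apply {X : Type*} [NormedAddCommGroup X] [NormedSpace ℂ X]
    [ProperSpace X] {g : X → ℂ} {O : Set X} (hO : IsOpen O) (hg : DifferentiableOn ℂ g O)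
    (v : X) : DifferentiableOn ℂ (fun p => fderiv ℂ g p v) O := by
  intro p hp
  apply DifferentiableAt.differentiableWithinAt
  obtain ⟨r', hr', hrO'⟩ := Metric.isOpen_iff.1 hO p hp
  obtain ⟨r, hr, hrO⟩ : ∃ r > 0, closedBall p (2 * r) ⊆ O :=
    ⟨r' / 4, by positivity, (closedBall_subset_ball (by linarith)).trans hrO'⟩
  have hc := continuousOn_fderiv_of_holo hO hg
  obtain ⟨C, hC⟩ := (isCompact_closedBall p (2 * r)).exists_bound_of_continuousOn (hc.mono hrO)
  set ρ : ℝ := r / (‖v‖ + 1) with hρdef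
  have hρ : 0 < ρ := by positivity
  have hin : ∀ x ∈ ball p r, ∀ t : ℂ, ‖t‖ ≤ ρ → x + t • v ∈ closedBall p (2 * r) := by
    intro x hx t ht
    rw [mem_ball, dist_eq_norm] at hx
    rw [mem_closedBall, dist_eq_norm]
    have : ‖t‖ * ‖v‖ ≤ r := by
      rw [hρdef, le_div_iff₀ (by positivity)] at ht
      nlinarith [norm_nonneg t]
    calc ‖x + t • v - p‖ = ‖(x - p) + t • v‖ := by congr 1; abel
      _ ≤ ‖x - p‖ + ‖t • v‖ := norm_add_le _ _
      _ ≤ r + r := by rw [norm_smul]; exact add_le_add hx.le this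
      _ = 2 * r := by ring
  have hinO : ∀ x ∈ ball p r, ∀ t : ℂ, ‖t‖ ≤ ρ → x + t • v ∈ O :=
    fun x hx t ht => hrO (hin x hx t ht)
  have hcm : ∀ θ : ℝ, ‖circleMap 0 ρ θ‖ ≤ ρ := fun θ => by simp [abs_of_pos hρ]
  have hcm0 : ∀ θ : ℝ, circleMap 0 ρ θ ≠ 0 := fun θ => by
    simpa using circleMap_ne_center (c := 0) (R := ρ) (θ := θ) hρ.ne'
  set c : ℝ → ℂ := fun θ => deriv (circleMap 0 ρ) θ * (1 / (circleMap 0 ρ θ) ^ 2) with hcdef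
  have hcc : Continuous c := by
    simp only [hcdef, deriv_circleMap]
    refine ((continuous_circleMap 0 ρ).mul continuous_const).mul
      (Continuous.div continuous_const ((continuous_circleMap 0 ρ).pow 2) ?_)
    exact fun θ => pow_ne_zero 2 (hcm0 θ)
  have hcn : ∀ θ, ‖c θ‖ = 1 / ρ := by
    intro θ
    simp [hcdef, deriv_circleMap, abs_of_pos hρ]
    field_simp
  have hcontpt : ∀ x : X, Continuous fun θ : ℝ => x + circleMap 0 ρ θ • v := fun x =>
    continuous_const.add ((continuous_circleMap 0 ρ).smul continuous_const)
  have hgc : ∀ x ∈ ball p r, Continuous fun θ : ℝ => c θ * g (x + circleMap 0 ρ θ • v) := by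
    intro x hx
    exact hcc.mul (hg.continuousOn.comp_continuous (hcontpt x) fun θ => hinO x hx _ (hcm θ))
  have hform : ∀ x ∈ ball p r, fderiv ℂ g x v =
      (2 * π * Complex.I)⁻¹ * ∫ θ in (0 : ℝ)..2 * π, c θ * g (x + circleMap 0 ρ θ • v) := by
    intro x hx
    have hd : ∀ t ∈ closedBall (0 : ℂ) ρ,
        HasDerivAt (fun t : ℂ => g (x + t • v)) (fderiv ℂ g (x + t • v) v) t := by
      intro t ht
      have h1 : HasFDerivAt g (fderiv ℂ g (x + t • v)) (x + t • v) :=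
        (hg.differentiableAt (hO.mem_nhds (hinO x hx t (by simpa using ht)))).hasFDerivAt
      have h2 : HasDerivAt (fun t : ℂ => x + t • v) v t := by
        simpa using ((hasDerivAt_id t).smul_const v).const_add x
      exact h1.comp_hasDerivAt t h2
    have hdo : DifferentiableOn ℂ (fun t : ℂ => g (x + t • v)) (closedBall 0 ρ) :=
      fun t ht => (hd t ht).differentiableAt.differentiableWithinAt
    have := DifferentiableOn.deriv_eq_smul_circleIntegral hρ hdo
    rw [(hd 0 (by simpa using hρ.le)).deriv] at this
    simp only [zero_smul, add_zero, smul_eq_mul, circleIntegral, sub_zero] at this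
    rw [eq_inv_mul_iff_mul_eq₀ Complex.two_pi_I_ne_zero, ← this]
    refine intervalIntegral.integral_congr fun θ _ => ?_
    simp only [hcdef]
    ring
  have hmain : HasFDerivAt
      (fun x => ∫ θ in (0 : ℝ)..2 * π, c θ * g (x + circleMap 0 ρ θ • v))
      (∫ θ in (0 : ℝ)..2 * π, c θ • fderiv ℂ g (p + circleMap 0 ρ θ • v)) p := by
    have hpb : p ∈ ball p r := mem_ball_self hr
    refine intervalIntegral.hasFDerivAt_integral_of_dominated_of_fderiv_le
      (F' := fun x θ => c θ • fderiv ℂ g (x + circleMap 0 ρ θ • v))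
      (bound := fun _ => 1 / ρ * C) (ball_mem_nhds p hr) ?_ ?_ ?_ ?_ ?_ ?_
    · filter_upwards [ball_mem_nhds p hr] with x hx
      exact (hgc x hx).aestronglyMeasurable
    · exact (hgc p hpb).intervalIntegrable _ _
    · refine Continuous.aestronglyMeasurable (hcc.smul ?_)
      exact hc.comp_continuous (hcontpt p) fun θ => hinO p hpb _ (hcm θ)
    · refine Eventually.of_forall fun θ _ x hx => ?_
      rw [norm_smul, hcn]
      exact mul_le_mul_of_nonneg_left (hC _ (hin x hx _ (hcm θ))) (by positivity)
    · exact intervalIntegrable_const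
    · refine Eventually.of_forall fun θ _ x hx => ?_
      have h1 : HasFDerivAt g (fderiv ℂ g (x + circleMap 0 ρ θ • v)) (x + circleMap 0 ρ θ • v) :=
        (hg.differentiableAt (hO.mem_nhds (hinO x hx _ (hcm θ)))).hasFDerivAt
      have h2 := h1.comp x ((hasFDerivAt_id x).add_const (circleMap 0 ρ θ • v))
      have h3 := h2.const_mul (c θ)
      simpa using h3
  refine ((hmain.differentiableAt).const_mul ((2 * π * Complex.I)⁻¹)).congr_of_eventuallyEq ?_
  filter_upwards [ball_mem_nhds p hr] with x hx
  exact hform x hx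

/-- The `j`-th derivative in the second variable is holomorphic in both variables jointly. -/
theorem differentiableOn_iteratedDeriv {E : Type*} [NormedAddCommGroup E] [NormedSpace ℂ E]
    [ProperSpace E] {f : E → ℂ → ℂ} {O : Set (E × ℂ)} (hO : IsOpen O)
    (hf : DifferentiableOn ℂ (fun p : E × ℂ => f p.1 p.2) O) (j : ℕ) :
    DifferentiableOn ℂ (fun p : E × ℂ => iteratedDeriv j (f p.1) p.2) O := by
  induction j with
  | zero => simpa using hf
  | succ j ih =>
    refine (differentiableOn_fderiv_apply hO ih (0, 1)).congr fun p hp => ?_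
    have h1 : HasFDerivAt (fun p : E × ℂ => iteratedDeriv j (f p.1) p.2)
      (fderiv ℂ (fun p : E × ℂ => iteratedDeriv j (f p.1) p.2) p) p :=
      (ih.differentiableAt (hO.mem_nhds hp)).hasFDerivAt
    have h2 : HasDerivAt (fun z : ℂ => (p.1, z)) ((0 : E), (1 : ℂ)) p.2 :=
      (hasDerivAt_const _ _).prodMk (hasDerivAt_id _)
    rw [iteratedDeriv_succ]
    exact (h1.comp_hasDerivAt p.2 h2).deriv

theorem contDiffAt_one_of_holo {X : Type*} [NormedAddCommGroup X] [NormedSpace ℂ X]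
    [ProperSpace X] {g : X → ℂ} {O : Set X} (hO : IsOpen O) (hg : DifferentiableOn ℂ g O)
    {p : X} (hp : p ∈ O) : ContDiffAt ℂ 1 g p := by
  have : ContDiffOn ℂ 1 g O := by
    rw [show (1 : WithTop ℕ∞) = 0 + 1 by simp, contDiffOn_succ_iff_fderiv_of_isOpen hO]
    exact ⟨hg, by simp, contDiffOn_zero.2 (continuousOn_fderiv_of_holo hO hg)⟩
  exact this.contDiffAt (hO.mem_nhds hp)

/-- Taylor's estimate with the top derivative only approximately constant: if `h` vanishes to order
`m` at `ζ` and `h⁽ᵐ⁾` stays within `ε` of `c` on a convex domain, then `h z` is within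
`ε ‖z - ζ‖ ^ m` of `c (z - ζ) ^ m / m!`. The factor `1 / m!` in the error is not needed below. -/
theorem taylor_bound {D : Set ℂ} (hD : IsOpen D) (hDc : Convex ℝ D) {ζ : ℂ} (hζ : ζ ∈ D)
    {c : ℂ} {ε : ℝ} (m : ℕ) : ∀ {h : ℂ → ℂ}, DifferentiableOn ℂ h D →
    (∀ j < m, iteratedDeriv j h ζ = 0) → (∀ z ∈ D, ‖iteratedDeriv m h z - c‖ ≤ ε) →
    ∀ z ∈ D, ‖h z - c * (z - ζ) ^ m / m.factorial‖ ≤ ε * ‖z - ζ‖ ^ m := by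
  induction m with
  | zero =>
    intro h _ _ hb z hz
    simpa using hb z hz
  | succ m ih =>
    intro h hh h0 hb z hz
    have ih' := ih (h := deriv h) (hh.deriv hD)
      (fun j hj => by rw [← iteratedDeriv_succ']; exact h0 _ (by omega))
      (fun z hz => by rw [← iteratedDeriv_succ']; exact hb z hz)
    have hder : ∀ x ∈ D, HasDerivAt (fun x => h x - c * (x - ζ) ^ (m + 1) / (m + 1).factorial)
        (deriv h x - c * (x - ζ) ^ m / m.factorial) x := by
      intro x hx
      have h1 := (hh.differentiableAt (hD.mem_nhds hx)).hasDerivAt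
      have h2 := ((((hasDerivAt_id x).sub_const ζ).pow (m + 1)).const_mul c).div_const
        ((m + 1).factorial : ℂ)
      refine (h1.sub h2).congr_deriv ?_
      have : (m.factorial : ℂ) ≠ 0 := by exact_mod_cast m.factorial_ne_zero
      have h3 : ((m : ℂ) + 1) ≠ 0 := by exact_mod_cast m.succ_ne_zero
      simp [Nat.factorial_succ]
      field_simp
    set s := D ∩ closedBall ζ ‖z - ζ‖ with hs
    have hsc : Convex ℝ s := hDc.inter (convex_closedBall _ _)
    have hε : 0 ≤ ε := (norm_nonneg _).trans (hb z hz)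
    have := hsc.norm_image_sub_le_of_norm_hasDerivWithin_le (x := ζ) (y := z)
      (C := ε * ‖z - ζ‖ ^ m)
      (fun x hx => (hder x hx.1).hasDerivWithinAt) (fun x hx => by
        refine (ih' x hx.1).trans (mul_le_mul_of_nonneg_left ?_ hε)
        have : ‖x - ζ‖ ≤ ‖z - ζ‖ := by simpa [dist_eq_norm] using hx.2
        gcongr) ⟨hζ, by simp⟩ ⟨hz, by simp [dist_eq_norm]⟩
    have hz0 : h ζ = 0 := by simpa using h0 0 (by omega)
    simp only [hz0, sub_self, ne_eq, Nat.add_eq_zero_iff, one_ne_zero, and_false,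
      not_false_eq_true, zero_pow, mul_zero, zero_div, sub_zero] at this
    rw [pow_succ ‖z - ζ‖, ← mul_assoc]
    exact this

/-! ### Zero sets of holomorphic functions on real affine pieces -/

/-- A holomorphic function that is not identically zero on the image of an open convex set under a
real-affine map `w ↦ x₀ + L w` has a null zero set there. No complex structure on `W` is available,
so one restricts to real rays from a point `w₁` where the function is nonzero: the restriction to
each ray extends holomorphically to a neighbourhood in `ℂ`, hence has isolated zeros. -/
theorem null_zeros {W : Type*} [NormedAddCommGroup W] [NormedSpace ℝ W] [FiniteDimensional ℝ W]
    [MeasurableSpace W] [BorelSpace W] (μ : Measure W) [μ.IsAddHaarMeasure]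
    {E : Type*} [NormedAddCommGroup E] [NormedSpace ℂ E] [NormedSpace ℝ E] [IsScalarTower ℝ ℂ E]
    (L : W →L[ℝ] E) (x₀ : E) {N : Set W} (hNo : IsOpen N) (hNc : Convex ℝ N)
    {g : E → ℂ} {O : Set E} (hO : IsOpen O) (hg : DifferentiableOn ℂ g O)
    (hNO : ∀ w ∈ N, x₀ + L w ∈ O) {w₁ : W} (hw₁ : w₁ ∈ N) (hne : g (x₀ + L w₁) ≠ 0) :
    μ {w | w ∈ N ∧ g (x₀ + L w) = 0} = 0 := by
  set Z : Set W := {w | w ∈ N ∧ g (x₀ + L w) = 0} with hZ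
  set Z' : Set W := (fun u => w₁ + u) ⁻¹' Z with hZ'
  have hgc : ContinuousOn (fun w => g (x₀ + L w)) N :=
    hg.continuousOn.comp (by fun_prop) hNO
  have hZm : MeasurableSet Z := by
    obtain ⟨C, hC, hCe⟩ := (continuousOn_iff_isClosed.1 hgc) {0} isClosed_singleton
    have : Z = C ∩ N := by
      rw [← hCe]; ext w; simp [hZ, and_comm]
    rw [this]
    exact hC.measurableSet.inter hNo.measurableSet
  have hZm' : MeasurableSet Z' := (measurable_const_add w₁) hZm
  have hμ : μ Z' = μ Z := measure_preimage_add μ w₁ Z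
  rw [← hμ]
  -- Every ray meets `Z'` in a null set of parameters. By Fubini some dilate `t⁻¹ • Z'` with `t ≠ 0`
  -- is null, and then so is `Z'`, by the scaling behaviour of Haar measure.
  set A : Set (ℝ × W) := {q | q.1 • q.2 ∈ Z'} with hA
  have hAm : MeasurableSet A := by
    have : Measurable fun q : ℝ × W => q.1 • q.2 := by fun_prop
    exact this hZm'
  have hslice : ∀ u : W, volume {t : ℝ | t • u ∈ Z'} = 0 := by
    intro u
    set T : Set ℝ := {t : ℝ | t • u ∈ Z'} with hT
    set J : Set ℝ := {t : ℝ | w₁ + t • u ∈ N} with hJ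
    have hJc : Convex ℝ J := by
      have he : J = (AffineMap.lineMap w₁ (w₁ + u) : ℝ →ᵃ[ℝ] W) ⁻¹' N := by
        ext t
        simp [hJ, AffineMap.lineMap_apply, add_comm]
      rw [he]
      exact hNc.affine_preimage _
    have h0J : (0 : ℝ) ∈ J := by simpa [hJ] using hw₁
    set U : Set ℂ := {τ | x₀ + L w₁ + τ • L u ∈ O} with hU
    have hUo : IsOpen U := hO.preimage (by fun_prop : Continuous fun τ : ℂ => x₀ + L w₁ + τ • L u)
    set φ : ℂ → ℂ := fun τ => g (x₀ + L w₁ + τ • L u) with hφ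
    have hφan : AnalyticOnNhd ℂ φ U := by
      refine DifferentiableOn.analyticOnNhd ?_ hUo
      exact hg.comp (by fun_prop) fun τ hτ => hτ
    have hreal : ∀ t : ℝ, x₀ + L w₁ + (t : ℂ) • L u = x₀ + L (w₁ + t • u) := by
      intro t
      have : (t : ℂ) • L u = t • L u := by
        rw [← Complex.coe_algebraMap, algebraMap_smul]
      rw [this]
      simp [add_assoc]
    have hJU : (fun t : ℝ => (t : ℂ)) '' J ⊆ U := by
      rintro _ ⟨t, ht, rfl⟩
      change x₀ + L w₁ + (t : ℂ) • L u ∈ O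
      rw [hreal]; exact hNO _ ht
    have hpre : IsPreconnected ((fun t : ℝ => (t : ℂ)) '' J) :=
      hJc.isPreconnected.image _ Complex.continuous_ofReal.continuousOn
    refine measure_null_of_locally_null T fun t ht => ⟨{t}, ?_, measure_singleton t⟩
    have htJ : t ∈ J := ht.1
    have hev : ∀ᶠ τ in 𝓝[≠] (t : ℂ), φ τ ≠ 0 := by
      rcases (hφan t (hJU ⟨t, htJ, rfl⟩)).eventually_eq_zero_or_eventually_ne_zero with h | h
      · exfalso
        have := (hφan.mono hJU).eqOn_zero_of_preconnected_of_eventuallyEq_zero hpre ⟨t, htJ, rfl⟩ h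
          ⟨0, h0J, rfl⟩
        apply hne
        simpa [hφ] using this
      · exact h
    rw [eventually_nhdsWithin_iff] at hev
    have hev' := Complex.continuous_ofReal.continuousAt.eventually hev
    rw [mem_nhdsWithin_iff_eventually]
    filter_upwards [hev'] with t' ht' htT
    by_contra hcon
    refine ht' (by simpa using hcon) ?_
    simp only [hφ]
    rw [hreal]
    exact htT.2
  have hprod : (volume.prod μ) A = 0 := by
    rw [Measure.prod_apply_symm hAm]
    have : ∀ u : W, volume ((fun t : ℝ => (t, u)) ⁻¹' A) = 0 := hslice
    simp [this]
  have hae := Measure.measure_ae_null_of_prod_null hprod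
  have hne0 : ∀ᵐ t : ℝ, t ≠ 0 := by
    simp [ae_iff]
  obtain ⟨t, ht, ht0⟩ := (hae.and hne0).exists
  have h1 : μ ((fun u => t • u) ⁻¹' Z') = 0 := ht
  rw [Measure.addHaar_preimage_smul μ ht0] at h1
  rcases mul_eq_zero.1 h1 with h | h
  · exfalso
    rw [ENNReal.ofReal_eq_zero] at h
    have : 0 < |(t ^ Module.finrank ℝ W)⁻¹| := by positivity
    linarith
  · exact h

/-! ### Splitting of zeros -/

/-- Each function `F w'` has at most one zero near `q`, uniformly for `w'` near `q.1`. A point `q`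
where `F` does not vanish satisfies this, and so does a multiple zero that persists without
splitting. -/
def LocUniq {W : Type*} [TopologicalSpace W] (F : W → ℂ → ℂ) (q : W × ℂ) : Prop :=
  ∃ T ∈ 𝓝 q, ∀ p ∈ T, ∀ p' ∈ T, p.1 = p'.1 → F p.1 p.2 = 0 → F p'.1 p'.2 = 0 → p.2 = p'.2

theorem LocUniq.eventually {W : Type*} [TopologicalSpace W] {F : W → ℂ → ℂ} {q : W × ℂ}
    (h : LocUniq F q) : ∀ᶠ p in 𝓝 q, LocUniq F p := by
  obtain ⟨T, hT, H⟩ := h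
  filter_upwards [eventually_mem_nhds_iff.2 hT] with p hp
  exact ⟨T, hp, H⟩

/-- If `LocUniq` holds at every point of the compact disk over `w`, cover the disk by finitely many
neighbourhoods containing at most one zero of each nearby `F w'`, centred at a zero of `F w` if they
contain any. Sending a zero to the centre of its neighbourhood is injective on the zeros of
`F w'`. -/
theorem numZeros_eventually_le {W : Type*} [TopologicalSpace W] {F : W → ℂ → ℂ} {ρ : ℝ} {w : W}
    (hc : ∀ z ∈ closedBall (0 : ℂ) ρ, ContinuousAt (fun q : W × ℂ => F q.1 q.2) (w, z))
    (hu : ∀ z ∈ closedBall (0 : ℂ) ρ, LocUniq F (w, z)) :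
    ∀ᶠ w' in 𝓝 w, numZeros (F w') ρ ≤ numZeros (F w) ρ := by
  have key : ∀ z ∈ closedBall (0 : ℂ) ρ, ∃ N ∈ 𝓝 w, ∃ D ∈ 𝓝 z, ∀ w' ∈ N,
      (∀ z₁ ∈ D, F w' z₁ = 0 → F w z = 0) ∧
      (∀ z₁ ∈ D, ∀ z₂ ∈ D, F w' z₁ = 0 → F w' z₂ = 0 → z₁ = z₂) := by
    intro z hz
    obtain ⟨T, hT, H⟩ := hu z hz
    by_cases h0 : F w z = 0
    · obtain ⟨N, hN, D, hD, hND⟩ := mem_nhds_prod_iff.1 hT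
      exact ⟨N, hN, D, hD, fun w' hw' => ⟨fun _ _ _ => h0, fun z₁ h₁ z₂ h₂ e₁ e₂ =>
        H (w', z₁) (hND ⟨hw', h₁⟩) (w', z₂) (hND ⟨hw', h₂⟩) rfl e₁ e₂⟩⟩
    · have hne : ∀ᶠ q in 𝓝 (w, z), F q.1 q.2 ≠ 0 := (hc z hz).eventually_ne h0
      obtain ⟨N, hN, D, hD, hND⟩ := mem_nhds_prod_iff.1 hne
      exact ⟨N, hN, D, hD, fun w' hw' =>
        ⟨fun z₁ h₁ e => absurd e (hND (show (w', z₁) ∈ N ×ˢ D from ⟨hw', h₁⟩)),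
        fun z₁ h₁ _ _ e => absurd e (hND (show (w', z₁) ∈ N ×ˢ D from ⟨hw', h₁⟩))⟩⟩
  choose! N hN D hD H using key
  obtain ⟨t, htK, ht⟩ := (isCompact_closedBall (0 : ℂ) ρ).elim_nhds_subcover D hD
  have hev : ∀ᶠ w' in 𝓝 w, ∀ z ∈ t, w' ∈ N z :=
    (Finset.eventually_all t).2 fun z hz => hN z (htK z hz)
  filter_upwards [hev] with w' hw'
  have hch : ∀ z ∈ closedBall (0 : ℂ) ρ, ∃ y ∈ t, z ∈ D y := by
    intro z hz
    simpa using ht hz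
  choose! φ hφt hφD using hch
  unfold numZeros
  refine ENat.toENNReal_mono (Set.encard_le_encard_of_injOn (f := φ) ?_ ?_)
  · rintro z ⟨hz, hz0⟩
    exact ⟨htK _ (hφt z hz), (H _ (htK _ (hφt z hz)) w' (hw' _ (hφt z hz))).1 z (hφD z hz) hz0⟩
  · rintro z ⟨hz, hz0⟩ z' ⟨hz', hz0'⟩ e
    refine (H _ (htK _ (hφt z hz)) w' (hw' _ (hφt z hz))).2 z (hφD z hz) z' ?_ hz0 hz0'
    rw [e]
    exact hφD z' hz'

/-- Near a zero of multiplicity `n + 1` at which `LocUniq` fails, the zeros of multiplicity at least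
`n + 1` project to a null set of parameters. By the implicit function theorem the zeros of the
`n`-th derivative form a holomorphic graph `z = ψ v`. If all lower derivatives vanished along the
graph, Taylor's estimate would leave the graph as the only zero, contradicting the failure of
`LocUniq`. So some lower derivative is not identically zero along the graph, and `null_zeros`
applies to it. -/
theorem local_null {W : Type*} [NormedAddCommGroup W] [NormedSpace ℝ W] [FiniteDimensional ℝ W]
    [MeasurableSpace W] [BorelSpace W] (μ : Measure W) [μ.IsAddHaarMeasure]
    {E : Type*} [NormedAddCommGroup E] [NormedSpace ℂ E] [NormedSpace ℝ E] [IsScalarTower ℝ ℂ E]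
    [ProperSpace E] (L : W →L[ℝ] E) (x₀ : E) {f : E → ℂ → ℂ} {Ω : Set E} (hΩ : IsOpen Ω)
    (hf : DifferentiableOn ℂ (fun p : E × ℂ => f p.1 p.2) (Ω ×ˢ ball (0 : ℂ) 1))
    {w₀ : W} (hw₀ : x₀ + L w₀ ∈ Ω) {z₀ : ℂ} (hz₀ : z₀ ∈ ball (0 : ℂ) 1) {n : ℕ}
    (hD0 : ∀ j ≤ n, iteratedDeriv j (f (x₀ + L w₀)) z₀ = 0)
    (hDn : iteratedDeriv (n + 1) (f (x₀ + L w₀)) z₀ ≠ 0)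
    (hbad : ¬ LocUniq (fun w => f (x₀ + L w)) (w₀, z₀)) :
    ∃ T ∈ 𝓝 (w₀, z₀), μ (Prod.fst '' {q : W × ℂ | q ∈ T ∧
      ∀ j ≤ n, iteratedDeriv j (f (x₀ + L q.1)) q.2 = 0}) = 0 := by
  set v₀ : E := x₀ + L w₀ with hv₀
  set u : E × ℂ := (v₀, z₀) with hu
  set P : Set (E × ℂ) := Ω ×ˢ ball (0 : ℂ) 1 with hP
  have hPo : IsOpen P := hΩ.prod isOpen_ball
  have huP : u ∈ P := ⟨hw₀, hz₀⟩
  set d : ℕ → E × ℂ → ℂ := fun j p => iteratedDeriv j (f p.1) p.2 with hd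
  have hdd : ∀ j, DifferentiableOn ℂ (d j) P := fun j => differentiableOn_iteratedDeriv hPo hf j
  set c : ℂ := d (n + 1) u with hc
  have hc0 : c ≠ 0 := hDn
  have hdn : d n u = 0 := hD0 n le_rfl
  -- the zero set of the `n`-th derivative near `u` is a holomorphic graph
  have cdf : ContDiffAt ℂ 1 (d n) u := contDiffAt_one_of_holo hPo (hdd n) huP
  have hinr1 : fderiv ℂ (d n) u (0, 1) = c := by
    have h1 : HasFDerivAt (d n) (fderiv ℂ (d n) u) u :=
      ((hdd n).differentiableAt (hPo.mem_nhds huP)).hasFDerivAt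
    have h2 : HasDerivAt (fun z : ℂ => (v₀, z)) ((0 : E), (1 : ℂ)) z₀ :=
      (hasDerivAt_const _ _).prodMk (hasDerivAt_id _)
    have h3 := (h1.comp_hasDerivAt z₀ h2).deriv
    rw [← h3, hc]
    simp only [hd, iteratedDeriv_succ]
    rfl
  have hinv : (fderiv ℂ (d n) u ∘L .inr ℂ E ℂ).IsInvertible := by
    have happ : (fderiv ℂ (d n) u ∘L .inr ℂ E ℂ) = c • ContinuousLinearMap.id ℂ ℂ := by
      ext
      simpa using hinr1
    rw [happ]
    refine ContinuousLinearMap.IsInvertible.of_inverse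
      (g := c⁻¹ • ContinuousLinearMap.id ℂ ℂ) ?_ ?_ <;> ext <;> simp [hc0]
  set ψ : E → ℂ := cdf.implicitFunction one_ne_zero hinv with hψ
  have ha : ∀ᶠ p in 𝓝 u, d n p = 0 ↔ ψ p.1 = p.2 := by
    have := cdf.eventually_apply_eq_iff_implicitFunction one_ne_zero hinv
    rwa [hdn] at this
  have hb : ∀ᶠ v in 𝓝 v₀, d n (v, ψ v) = 0 := by
    have := cdf.eventually_apply_implicitFunction one_ne_zero hinv
    rwa [hdn] at this
  have hψc : ContDiffAt ℂ 1 ψ v₀ := cdf.contDiffAt_implicitFunction one_ne_zero hinv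
  have hψ0 : ψ v₀ = z₀ := cdf.implicitFunction_apply_self one_ne_zero hinv
  have hψd : ∀ᶠ v in 𝓝 v₀, DifferentiableAt ℂ ψ v :=
    (hψc.eventually (by simp)).mono fun v hv => hv.differentiableAt (by simp)
  -- half of the leading coefficient `‖c‖ / (n + 1)!`, so that the Taylor error cannot cancel it
  set ε : ℝ := ‖c‖ / (2 * (n + 1).factorial) with hε
  have hfac : (0 : ℝ) < (n + 1).factorial := by exact_mod_cast (n + 1).factorial_pos
  have hcpos : 0 < ‖c‖ := norm_pos_iff.2 hc0
  have hεpos : 0 < ε := by positivity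
  have he : ∀ᶠ p in 𝓝 u, ‖d (n + 1) p - c‖ < ε := by
    have := ((hdd (n + 1)).continuousOn.continuousAt (hPo.mem_nhds huP)).eventually
      (ball_mem_nhds _ hεpos)
    simpa [dist_eq_norm] using this
  obtain ⟨δ, hδ, hball⟩ := Metric.eventually_nhds_iff_ball.1
    ((ha.and he).and (hPo.mem_nhds huP))
  have hball' : ∀ v ∈ ball v₀ δ, ∀ z ∈ ball z₀ δ,
      ((d n (v, z) = 0 ↔ ψ v = z) ∧ ‖d (n + 1) (v, z) - c‖ < ε) ∧ (v, z) ∈ P := by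
    intro v hv z hz
    exact hball (v, z) (by rw [← ball_prod_same]; exact ⟨hv, hz⟩)
  have hψball : ∀ᶠ v in 𝓝 v₀, ψ v ∈ ball z₀ δ := by
    have := hψc.continuousAt.eventually (ball_mem_nhds _ hδ)
    rwa [hψ0] at this
  obtain ⟨r, hr, hrb⟩ := Metric.eventually_nhds_iff_ball.1
    (((hb.and hψd).and hψball).and (ball_mem_nhds v₀ hδ))
  have haff : Continuous fun w : W => x₀ + L w := by fun_prop
  obtain ⟨r', hr', hrb'⟩ := Metric.eventually_nhds_iff_ball.1
    (haff.continuousAt.eventually (ball_mem_nhds (x₀ + L w₀) hr))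
  have hzΩ : ∀ v ∈ ball v₀ r, ∀ z ∈ ball z₀ δ, v ∈ Ω ∧ z ∈ ball (0 : ℂ) 1 := fun v hv z hz =>
    (hball' v (hrb v hv).2 z hz).2
  have hT : ball w₀ r' ×ˢ ball z₀ δ ∈ 𝓝 (w₀, z₀) :=
    prod_mem_nhds (ball_mem_nhds _ hr') (ball_mem_nhds _ hδ)
  by_cases hall : ∀ w ∈ ball w₀ r', ∀ j < n, d j (x₀ + L w, ψ (x₀ + L w)) = 0
  · -- every zero near `(w₀, z₀)` then lies on the graph of `ψ`
    exfalso
    apply hbad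
    have honly : ∀ w ∈ ball w₀ r', ∀ z ∈ ball z₀ δ, f (x₀ + L w) z = 0 → z = ψ (x₀ + L w) := by
      intro w hw z hz hzero
      have hv : x₀ + L w ∈ ball v₀ r := hrb' w hw
      obtain ⟨⟨⟨hbv, -⟩, hψv⟩, hvδ⟩ := hrb _ hv
      have hhol : DifferentiableOn ℂ (f (x₀ + L w)) (ball z₀ δ) :=
        hf.comp (f := fun z : ℂ => (x₀ + L w, z)) (by fun_prop) fun z hz => hzΩ _ hv z hz
      have := taylor_bound isOpen_ball (convex_ball z₀ δ) hψv (c := c) (ε := ε) (n + 1) hhol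
        (fun j hj => by
          rcases Nat.lt_succ_iff_lt_or_eq.1 hj with h | rfl
          · exact hall w hw j h
          · exact hbv)
        (fun z hz => ((hball' _ hvδ z hz).1.2).le) z hz
      rw [hzero, zero_sub, norm_neg, norm_div, norm_mul, norm_pow, Complex.norm_natCast, hε] at this
      have h3 : ‖z - ψ (x₀ + L w)‖ ^ (n + 1) ≤ 0 := by
        by_contra hcon
        push Not at hcon
        have h4 : ‖c‖ / (2 * (n + 1).factorial) * ‖z - ψ (x₀ + L w)‖ ^ (n + 1) =
          (‖c‖ * ‖z - ψ (x₀ + L w)‖ ^ (n + 1) / (n + 1).factorial) / 2 := by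
          field_simp
        have h5 : 0 < ‖c‖ * ‖z - ψ (x₀ + L w)‖ ^ (n + 1) / (n + 1).factorial := by positivity
        linarith
      have h4 : ‖z - ψ (x₀ + L w)‖ = 0 :=
        pow_eq_zero_iff (n.succ_ne_zero) |>.1 (le_antisymm h3 (by positivity))
      exact sub_eq_zero.1 (norm_eq_zero.1 h4)
    refine ⟨_, hT, ?_⟩
    rintro ⟨w, z⟩ ⟨hw, hz⟩ ⟨w', z'⟩ ⟨hw', hz'⟩ (rfl : w = w') e e'
    exact (honly w hw z hz e).trans (honly w hw z' hz' e').symm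
  · push Not at hall
    obtain ⟨w₁, hw₁, j, hj, hne⟩ := hall
    refine ⟨_, hT, ?_⟩
    have hg : DifferentiableOn ℂ (fun v => d j (v, ψ v)) (ball v₀ r) := by
      refine (hdd j).comp (f := fun v => (v, ψ v)) ?_ fun v hv => hzΩ v hv _ (hrb v hv).1.2
      exact differentiableOn_id.prodMk fun v hv => (hrb v hv).1.1.2.differentiableWithinAt
    have hnull := null_zeros μ L x₀ isOpen_ball (convex_ball w₀ r') isOpen_ball hg
      (fun w hw => hrb' w hw) hw₁ hne
    refine measure_mono_null ?_ hnull
    rintro _ ⟨⟨w, z⟩, ⟨⟨hw, hz⟩, hzero⟩, rfl⟩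
    refine ⟨hw, ?_⟩
    have hv : x₀ + L w ∈ ball v₀ r := hrb' w hw
    have h1 : ψ (x₀ + L w) = z := (hball' _ (hrb _ hv).2 z hz).1.1.1 (hzero n le_rfl)
    change d j (x₀ + L w, ψ (x₀ + L w)) = 0
    rw [h1]
    exact hzero j hj.le

/-- On an open convex set of parameters, off a relatively closed null set the zero count does not
increase under small perturbations. The good set consists of the `w` with `LocUniq` at every point
of the closed disk. A bad `w` either gives a function vanishing identically or has a zero of some
finite multiplicity `n + 1` at which `LocUniq` fails; for fixed `n` the latter are covered by
countably many of the null sets of `local_null`. -/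
theorem exists_good_set {W : Type*} [NormedAddCommGroup W] [NormedSpace ℝ W]
    [FiniteDimensional ℝ W]
    [MeasurableSpace W] [BorelSpace W] (μ : Measure W) [μ.IsAddHaarMeasure]
    {E : Type*} [NormedAddCommGroup E] [NormedSpace ℂ E] [NormedSpace ℝ E] [IsScalarTower ℝ ℂ E]
    [ProperSpace E] (L : W →L[ℝ] E) (x₀ : E) {f : E → ℂ → ℂ} {Ω : Set E} (hΩ : IsOpen Ω)
    (hf : DifferentiableOn ℂ (fun p : E × ℂ => f p.1 p.2) (Ω ×ˢ ball (0 : ℂ) 1))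
    {U : Set W} (hU : IsOpen U) (hUc : Convex ℝ U) (hUΩ : ∀ w ∈ U, x₀ + L w ∈ Ω)
    {ρ : ℝ} (hρ1 : ρ < 1) :
    ∃ G ⊆ U, IsOpen G ∧ μ (U \ G) = 0 ∧ ∀ w ∈ G,
      ∀ᶠ w' in 𝓝 w, numZeros (f (x₀ + L w')) ρ ≤ numZeros (f (x₀ + L w)) ρ := by
  have hKb : closedBall (0 : ℂ) ρ ⊆ ball 0 1 := closedBall_subset_ball hρ1
  -- If every function vanishes identically, all counts are the same and `U` itself is good.
  by_cases htriv : ∀ w ∈ U, ∀ z ∈ ball (0 : ℂ) 1, f (x₀ + L w) z = 0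
  · refine ⟨U, subset_rfl, hU, by simp, fun w hw => ?_⟩
    filter_upwards [hU.mem_nhds hw] with w' hw'
    refine ENat.toENNReal_mono (Set.encard_le_encard ?_)
    rintro z ⟨hz, -⟩
    exact ⟨hz, htriv w hw z (hKb hz)⟩
  push Not at htriv
  obtain ⟨ws, hws, zs, hzs, hs⟩ := htriv
  have hPo : IsOpen (Ω ×ˢ ball (0 : ℂ) 1) := hΩ.prod isOpen_ball
  have hFc : ∀ w ∈ U, ∀ z ∈ ball (0 : ℂ) 1,
      ContinuousAt (fun q : W × ℂ => f (x₀ + L q.1) q.2) (w, z) := by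
    intro w hw z hz
    have h1 : ContinuousAt (fun p : E × ℂ => f p.1 p.2) (x₀ + L w, z) :=
      hf.continuousOn.continuousAt (hPo.mem_nhds ⟨hUΩ w hw, hz⟩)
    have h2 : ContinuousAt (fun q : W × ℂ => (x₀ + L q.1, q.2)) (w, z) :=
      (by fun_prop : Continuous fun q : W × ℂ => (x₀ + L q.1, q.2)).continuousAt
    exact ContinuousAt.comp (g := fun p : E × ℂ => f p.1 p.2) (x := (w, z)) h1 h2
  set F : W → ℂ → ℂ := fun w => f (x₀ + L w) with hF
  set G : Set W := {w | w ∈ U ∧ ∀ z ∈ closedBall (0 : ℂ) ρ, LocUniq F (w, z)} with hG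
  refine ⟨G, fun w hw => hw.1, ?_, ?_, fun w hw =>
    numZeros_eventually_le (F := F) (fun z hz => hFc w hw.1 z (hKb hz)) hw.2⟩
  · rw [isOpen_iff_mem_nhds]
    rintro w ⟨hw, hw'⟩
    have hUw : ∀ᶠ x in 𝓝 w, x ∈ U := hU.mem_nhds hw
    exact hUw.and ((isCompact_closedBall (0 : ℂ) ρ).eventually_forall_of_forall_eventually
        fun z hz => (hw' z hz).eventually)
  · -- `B n`: the zeros of multiplicity exactly `n + 1` at which `LocUniq` fails
    set B : ℕ → Set (W × ℂ) := fun n => {q | q.1 ∈ U ∧ q.2 ∈ ball (0 : ℂ) 1 ∧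
      ¬ LocUniq F q ∧ (∀ j ≤ n, iteratedDeriv j (F q.1) q.2 = 0) ∧
      iteratedDeriv (n + 1) (F q.1) q.2 ≠ 0} with hB
    have hcover : U \ G ⊆ {w | w ∈ U ∧ f (x₀ + L w) zs = 0} ∪ ⋃ n, Prod.fst '' B n := by
      rintro w ⟨hw, hwG⟩
      have : ∃ z ∈ closedBall (0 : ℂ) ρ, ¬ LocUniq F (w, z) := by
        by_contra! hcon
        exact hwG ⟨hw, hcon⟩
      obtain ⟨z, hz, hbad⟩ := this
      have hzb := hKb hz
      by_cases hall : ∀ j, iteratedDeriv j (F w) z = 0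
      · left
        refine ⟨hw, ?_⟩
        have han : AnalyticOnNhd ℂ (F w) (ball 0 1) := by
          refine DifferentiableOn.analyticOnNhd ?_ isOpen_ball
          exact hf.comp (f := fun z : ℂ => (x₀ + L w, z)) (by fun_prop)
            fun z hz => ⟨hUΩ w hw, hz⟩
        refine han.eqOn_zero_of_preconnected_of_eventuallyEq_zero
          (convex_ball (0 : ℂ) 1).isPreconnected hzb ?_ hzs
        -- the Taylor series at `z` is zero
        have hp := (han z hzb).hasFPowerSeriesAt
        have hz0 : (FormalMultilinearSeries.ofScalars ℂ
            (fun n => iteratedDeriv n (F w) z / n.factorial)) = 0 := by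
          simp only [hall, zero_div]
          ext n
          simp
        rw [hz0] at hp
        exact hp.eventually_eq_zero
      · right
        push Not at hall
        classical
        have hmin := Nat.find_spec hall
        have hlt := fun j (hj : j < Nat.find hall) => not_not.1 (Nat.find_min hall hj)
        rcases hk : Nat.find hall with _ | n
        · exfalso
          rw [hk] at hmin
          apply hbad
          have hne : ∀ᶠ q in 𝓝 (w, z), F q.1 q.2 ≠ 0 :=
            (hFc w hw z hzb).eventually_ne (by simpa using hmin)
          exact ⟨_, hne, fun p hp _ _ _ e => absurd e hp⟩
        · rw [hk] at hmin hlt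
          exact mem_iUnion.2 ⟨n, (w, z), ⟨hw, hzb, hbad, fun j hj => hlt j (by omega), hmin⟩, rfl⟩
    refine measure_mono_null hcover (measure_union_null ?_ (measure_iUnion_null fun n => ?_))
    · refine null_zeros μ L x₀ hU hUc hΩ (g := fun v => f v zs) ?_ hUΩ hws hs
      exact hf.comp (f := fun v : E => (v, zs)) (by fun_prop) fun v hv => ⟨hv, hzs⟩
    · have hloc : ∀ q ∈ B n, ∃ T ∈ 𝓝 q, μ (Prod.fst '' {p : W × ℂ | p ∈ T ∧
          ∀ j ≤ n, iteratedDeriv j (F p.1) p.2 = 0}) = 0 := by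
        rintro ⟨w, z⟩ ⟨hw, hz, hbad, h0, hne⟩
        exact local_null μ L x₀ hΩ hf (hUΩ w hw) hz h0 hne hbad
      choose! T hT hTμ using hloc
      obtain ⟨t, htB, htc, ht⟩ := TopologicalSpace.countable_cover_nhdsWithin (s := B n)
        (f := T) fun q hq => mem_nhdsWithin_of_mem_nhds (hT q hq)
      refine measure_mono_null (t := ⋃ q ∈ t, Prod.fst '' {p : W × ℂ | p ∈ T q ∧
          ∀ j ≤ n, iteratedDeriv j (F p.1) p.2 = 0}) ?_
        ((measure_biUnion_null_iff htc).2 fun q hq => hTμ q (htB hq))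
      rintro _ ⟨p, hp, rfl⟩
      obtain ⟨q, hq, hpq⟩ := mem_iUnion₂.1 (ht hp)
      exact mem_iUnion₂.2 ⟨q, hq, p, ⟨hpq, hp.2.2.2.1⟩, rfl⟩

/-! ### Convex sets of arbitrary real dimension -/

/-- The good set of `exists_good_set` transported to a convex set `V` by an isometric parametrization
`w ↦ x₀ + w` of its affine span. On the direction space, Hausdorff measure of the top dimension is a
Haar measure, so the frontier of the convex set `V'` corresponding to `V` is null. The set `A` is
the complement of the exceptional set. -/
theorem exists_exceptional {E : Type*} [NormedAddCommGroup E] [NormedSpace ℂ E]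
    [NormedSpace ℝ E] [IsScalarTower ℝ ℂ E] [FiniteDimensional ℝ E]
    [ProperSpace E] [MeasurableSpace E] [BorelSpace E]
    {f : E → ℂ → ℂ} {Ω : Set E} (hΩ : IsOpen Ω)
    (hf : DifferentiableOn ℂ (fun p : E × ℂ => f p.1 p.2) (Ω ×ˢ ball (0 : ℂ) 1))
    {ρ : ℝ} (hρ1 : ρ < 1) {V : Set E} (hV : Convex ℝ V) (hVΩ : V ⊆ Ω) (hne : V.Nonempty) :
    ∃ A ⊆ V, MeasurableSet A ∧ (∃ O, IsOpen O ∧ A = V ∩ O) ∧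
      μH[Module.finrank ℝ ↥(vectorSpan ℝ V)] (V \ A) = 0 ∧
      UpperSemicontinuousOn (fun v => numZeros (f v) ρ) A := by
  obtain ⟨x₀, hx₀⟩ := hne
  set W : Submodule ℝ E := vectorSpan ℝ V with hW
  set L : W →L[ℝ] E := W.subtypeL with hL
  set a : W → E := fun w => x₀ + L w with ha
  have hiso : Isometry a := by
    intro w w'
    simp [ha, hL, Subtype.edist_eq]
  have hemb : Topology.IsClosedEmbedding a := hiso.isClosedEmbedding
  set V' : Set W := a ⁻¹' V with hV'
  have hVa : a '' V' = V := by
    refine subset_antisymm (image_preimage_subset _ _) fun v hv => ?_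
    have hvW : v - x₀ ∈ W := vsub_mem_vectorSpan ℝ hv hx₀
    have : a ⟨v - x₀, hvW⟩ = v := by simp [ha, hL]
    exact ⟨⟨v - x₀, hvW⟩, by rw [hV', mem_preimage, this]; exact hv, this⟩
  have hconv : Convex ℝ V' := by
    intro w hw w' hw' s t hs ht hst
    have := hV hw hw' hs ht hst
    rw [hV', mem_preimage]
    convert this using 1
    simp only [ha, map_add, map_smul, smul_add]
    rw [show s • x₀ + s • L w + (t • x₀ + t • L w') = (s + t) • x₀ + (s • L w + t • L w') by
      rw [add_smul]; abel, hst, one_smul]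
  obtain ⟨G, hGU, hGo, hGμ, hG⟩ := exists_good_set (μH[Module.finrank ℝ W] : Measure W) L x₀ hΩ hf
    (U := interior V') isOpen_interior hconv.interior
    (fun w hw => hVΩ (interior_subset hw : w ∈ V')) hρ1
  have hGV : G ⊆ V' := hGU.trans interior_subset
  obtain ⟨O, hO, hOG⟩ := hemb.isOpen_iff.1 hGo
  refine ⟨a '' G, (image_mono hGV).trans hVa.le, ?_, ⟨O, hO, ?_⟩, ?_, ?_⟩
  · exact hemb.measurableEmbedding.measurableSet_image.2 hGo.measurableSet
  · rw [← hOG, image_preimage_eq_inter_range]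
    ext v
    constructor
    · rintro ⟨hv, w, rfl⟩
      exact ⟨hGV (show w ∈ G by rw [← hOG]; exact hv), hv⟩
    · rintro ⟨hv, hvO⟩
      rw [← hVa] at hv
      obtain ⟨w, -, rfl⟩ := hv
      exact ⟨hvO, w, rfl⟩
  · have : V \ a '' G = a '' (V' \ G) := by
      rw [image_sdiff hiso.injective, hVa]
    rw [this, hiso.hausdorffMeasure_image (Or.inl (by positivity))]
    have hfr : μH[Module.finrank ℝ W] (frontier V') = 0 := hconv.addHaar_frontier _
    refine measure_mono_null ?_ (measure_union_null hfr hGμ)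
    rintro w ⟨hw, hwG⟩
    by_cases h : w ∈ interior V'
    · exact Or.inr ⟨h, hwG⟩
    · exact Or.inl ⟨subset_closure hw, h⟩
  · rintro _ ⟨w, hw, rfl⟩ y hy
    have h1 : ∀ᶠ w' in 𝓝[G] w, numZeros (f (a w')) ρ < y :=
      ((hG w hw).filter_mono nhdsWithin_le_nhds).mono fun w' h => h.trans_lt hy
    rw [← hemb.isEmbedding.map_nhdsWithin_eq]
    exact h1

end

/-- outside a relatively closed subset `S ⊆ V` of `H^k`-measure zero, the
function `v ↦ 𝒩_{f,ρ}(v)` is upper semicontinuous; in particular it is `H^k`-measurable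
on `V` and all its superlevel sets in `V` are `H^k`-measurable. -/
theorem statement12 (s : ℕ) (hs : 1 ≤ s) (R ρ : ℝ) (hR : 1 < R) (hρ0 : 0 < ρ)
    (hρ1 : ρ < 1) (f : EuclideanSpace ℂ (Fin s) → ℂ → ℂ)
    (hf : DifferentiableOn ℂ (fun p : EuclideanSpace ℂ (Fin s) × ℂ => f p.1 p.2)
      (ball (0 : EuclideanSpace ℂ (Fin s)) R ×ˢ ball (0 : ℂ) 1))
    (V : Set (EuclideanSpace ℂ (Fin s))) (hV : Convex ℝ V)
    (hVb : Bornology.IsBounded V) (hV1 : V ⊆ ball 0 1)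
    (k : ℕ) (hk : Module.finrank ℝ ↥(vectorSpan ℝ V) = k) :
    ∃ S : Set (EuclideanSpace ℂ (Fin s)), S ⊆ V ∧
      IsClosed {x : V | (x : EuclideanSpace ℂ (Fin s)) ∈ S} ∧
      μH[k] S = 0 ∧
      UpperSemicontinuousOn (fun v => numZeros (f v) ρ) (V \ S) ∧
      AEMeasurable (fun v => numZeros (f v) ρ) (μH[k].restrict V) ∧
      ∀ T : ℝ, 0 ≤ T →
        NullMeasurableSet {v ∈ V | ENNReal.ofReal T ≤ numZeros (f v) ρ} μH[k] := by
  rcases V.eq_empty_or_nonempty with rfl | hne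
  · exact ⟨∅, by simp, by simp, by simp, fun v hv => absurd hv (by simp), by simp, by simp⟩
  have : FiniteDimensional ℝ (EuclideanSpace ℂ (Fin s)) := FiniteDimensional.complexToReal _
  have hVR : V ⊆ ball 0 R := hV1.trans (ball_subset_ball hR.le)
  obtain ⟨A, hAV, hAm, ⟨O, hO, hAO⟩, hA0, husc⟩ := exists_exceptional isOpen_ball hf hρ1 hV hVR hne
  rw [hk] at hA0
  -- `V` and `A` agree up to a null set, so both measurability claims may be checked on `A`, where
  -- the zero count is semicontinuous and hence Borel.
  have hae : V =ᵐ[μH[k]] A :=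
    (measure_eq_zero_iff_ae_notMem.1 hA0).mono fun v hv =>
      propext ⟨fun h => by_contra fun h' => hv ⟨h, h'⟩, fun h => hAV h⟩
  have hmeas : Measurable fun v : A => numZeros (f v) ρ :=
    UpperSemicontinuous.measurable (semicontinuous_restrict_iff.2 husc)
  have haem : AEMeasurable (fun v => numZeros (f v) ρ) (μH[k].restrict V) := by
    rw [Measure.restrict_congr_set hae]
    exact (aemeasurable_restrict_iff_comap_subtype hAm).2 hmeas.aemeasurable
  refine ⟨V \ A, Set.sdiff_subset, ?_, hA0, ?_, haem, fun T _ => ?_⟩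
  · have : {x : V | (x : EuclideanSpace ℂ (Fin s)) ∈ V \ A} = (Subtype.val ⁻¹' O)ᶜ := by
      ext x
      simp [hAO]
    rw [this]
    exact (hO.preimage continuous_subtype_val).isClosed_compl
  · rwa [Set.sdiff_sdiff_cancel_left hAV]
  · have h1 : MeasurableSet (Subtype.val '' {v : A | ENNReal.ofReal T ≤ numZeros (f v) ρ}) :=
      hAm.subtype_image (measurableSet_le measurable_const hmeas)
    refine h1.nullMeasurableSet.congr ?_
    filter_upwards [hae] with v hv
    have hv' : v ∈ V ↔ v ∈ A := iff_of_eq hv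
    refine propext ?_
    change v ∈ Subtype.val '' _ ↔ v ∈ V ∧ _
    rw [hv']
    simp [and_comm]
end
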